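/- arXiv:2510.01466 — 6 statements merged into one kernel-verified Lean document; each statement's English description precedes it below -/
import Mathlib

section
/- For all integers t ≥ 1 and Δ ≥ 3, there exists an open set F ⊆ ℂ containing the ray [0, ∞) such that for every finite S_{t,t,t}-free simple graph G of maximum degree at most Δ and every λ ∈ F, the univariate independence polynomial satisfies Z_{G,λ} ≠ 0. -/
attribute [local instance] Classical.propDecidable

/-- Multivariate independence polynomial of the induced subgraph `G[W]`:
the sum over all independent sets `S ⊆ W` of `∏ v ∈ S, lam v`. -/
noncomputable def indepPolyOn {V : Type*} [Fintype V] (G : SimpleGraph V)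
    (lam : V → ℂ) (W : Finset V) : ℂ :=
  ∑ S ∈ W.powerset, if (∀ u ∈ S, ∀ v ∈ S, ¬ G.Adj u v) then ∏ v ∈ S, lam v else 0

/-- Multivariate independence polynomial `Z_{G,λ}`. -/
noncomputable def indepPoly {V : Type*} [Fintype V] (G : SimpleGraph V)
    (lam : V → ℂ) : ℂ :=
  indepPolyOn G lam Finset.univ

/-- The subdivided claw `S_{t,t,t}`: three paths of length `t` sharing one common
endpoint (the vertex `none`). -/
def subdividedClaw (t : ℕ) : SimpleGraph (Option (Fin 3 × Fin t)) :=
  SimpleGraph.fromRel (fun a b =>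
    match a, b with
    | none, some (_, j) => (j : ℕ) = 0
    | some (i, j), some (i', j') => i = i' ∧ (j : ℕ) + 1 = (j' : ℕ)
    | _, _ => False)

/-- The open parabolic region `R(k) = {z : (Im z)² < (1/k)·Re z + 1/(4k²)}`. -/
def parabR (k : ℝ) : Set ℂ := {z : ℂ | z.im ^ 2 < z.re / k + 1 / (4 * k ^ 2)}

/-- The closed halfplane `H(t) = {z : Re z ≥ t}`. -/
def halfH (t : ℝ) : Set ℂ := {z : ℂ | t ≤ z.re}

namespace SubClaw

/-- Layered family of vertex sets. -/
structure Layered {V : Type} (G : SimpleGraph V) (S : ℕ → Finset V) : Prop where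
  root : ∀ x ∈ S 0, ∀ y ∈ S 0, x = y
  par : ∀ i, ∀ x ∈ S (i + 1), ∃ y ∈ S i, G.Adj y x
  ind : ∀ i j, ∀ x ∈ S i, ∀ y ∈ S j, G.Adj x y → i = j + 1 ∨ j = i + 1
  disj : ∀ i j, ∀ x ∈ S i, x ∈ S j → i = j

/-- A chain of ancestors from layer `0` to `x` in layer `n`. -/
structure Chain {V : Type} (G : SimpleGraph V) (S : ℕ → Finset V) (n : ℕ) (x : V)
    (a : ℕ → V) : Prop where
  last : a n = x
  mem : ∀ j ≤ n, a j ∈ S j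
  adj : ∀ j < n, G.Adj (a j) (a (j + 1))

lemma exists_chain {V : Type} {G : SimpleGraph V} {S : ℕ → Finset V} (h : Layered G S) :
    ∀ n, ∀ x ∈ S n, ∃ a, Chain G S n x a := by
  intro n
  induction n with
  | zero =>
    intro x hx
    refine ⟨fun _ => x, rfl, ?_, ?_⟩
    · intro j hj
      obtain rfl : j = 0 := by omega
      exact hx
    · intro j hj; omega
  | succ n ih =>
    intro x hx
    obtain ⟨y, hy, hyx⟩ := h.par n x hx
    obtain ⟨a, ha⟩ := ih y hy
    refine ⟨fun m => if m ≤ n then a m else x, ?_, ?_, ?_⟩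
    · simp
    · intro j hj
      by_cases hjn : j ≤ n
      · simpa [hjn] using ha.mem j hjn
      · obtain rfl : j = n + 1 := by omega
        simpa using hx
    · intro j hj
      by_cases hjn : j < n
      · have h1 : j ≤ n := by omega
        have h2 : j + 1 ≤ n := by omega
        simpa [h1, h2] using ha.adj j hjn
      · obtain rfl : j = n := by omega
        simpa [ha.last] using hyx

lemma Chain.splice {V : Type} {G : SimpleGraph V} {S : ℕ → Finset V} {n : ℕ} {x y : V}
    {a b : ℕ → V} (ha : Chain G S n x a) (hb : Chain G S n y b) (i : ℕ) (hi : i < n)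
    (hab : G.Adj (a i) (b (i + 1))) :
    Chain G S n y (fun m => if m ≤ i then a m else b m) := by
  refine ⟨?_, ?_, ?_⟩
  · have : ¬ n ≤ i := by omega
    simp [this, hb.last]
  · intro j hj
    by_cases h : j ≤ i
    · simpa [h] using ha.mem j hj
    · simpa [h] using hb.mem j hj
  · intro j hj
    rcases lt_trichotomy j i with h | h | h
    · have h1 : j ≤ i := by omega
      have h2 : j + 1 ≤ i := by omega
      simpa [h1, h2] using ha.adj j hj
    · subst h
      simpa using hab
    · have h1 : ¬ j ≤ i := by omega
      have h2 : ¬ j + 1 ≤ i := by omega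
      simpa [h1, h2] using hb.adj j hj

/-- From a branching pair of chains we get an induced subdivided claw. -/
lemma exists_claw {V : Type} {G : SimpleGraph V} {S : ℕ → Finset V} (h : Layered G S)
    {t n j : ℕ} {x y : V} {a b : ℕ → V} (ha : Chain G S n x a) (hb : Chain G S n y b)
    (hab : a j = b j) (htj : t ≤ j) (hjn : j + t ≤ n)
    (hmax : ∀ i, j < i → i ≤ n → ∀ a' b', Chain G S n x a' → Chain G S n y b' → a' i ≠ b' i) :
    Nonempty (subdividedClaw t ↪g G) := by
  -- no cross adjacency
  have hne : ∀ i, j < i → i ≤ n → a i ≠ b i := fun i h1 h2 => hmax i h1 h2 a b ha hb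
  have hc1 : ∀ i, j < i → i < n → ¬ G.Adj (a i) (b (i + 1)) := by
    intro i h1 h2 hadj
    exact hmax i h1 h2.le a _ ha (ha.splice hb i h2 hadj) (by simp)
  have hc2 : ∀ i, j < i → i < n → ¬ G.Adj (b i) (a (i + 1)) := by
    intro i h1 h2 hadj
    exact hmax i h1 h2.le _ b (hb.splice ha i h2 hadj) hb (by simp)
  let c : Fin 3 → ℕ → V := fun i l => if i = 0 then a (j + 1 + l) else if i = 1 then b (j + 1 + l)
    else a (j - 1 - l)
  let lay : Fin 3 → ℕ → ℕ := fun i l => if i = 2 then j - 1 - l else j + 1 + l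
  have hmem : ∀ i l, l < t → c i l ∈ S (lay i l) := by
    intro i l hl
    fin_cases i
    · exact ha.mem (j + 1 + l) (by omega)
    · exact hb.mem (j + 1 + l) (by omega)
    · exact ha.mem (j - 1 - l) (by omega)
  have hc0 : ∀ i l, l < t → (G.Adj (a j) (c i l) ↔ l = 0) := by
    intro i l hl
    constructor
    · intro hadj
      have := h.ind j (lay i l) _ (ha.mem j (by omega)) _ (hmem i l hl) hadj
      fin_cases i <;> simp [lay] at this <;> omega
    · rintro rfl
      fin_cases i
      · exact ha.adj j (by omega)
      · show G.Adj (a j) (b (j + 1))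
        rw [hab]; exact hb.adj j (by omega)
      · have := ha.adj (j - 1) (by omega)
        have e : j - 1 + 1 = j := by omega
        rw [e] at this
        exact this.symm
  have hcne : ∀ i l, l < t → a j ≠ c i l := by
    intro i l hl he
    have h1 := hmem i l hl
    rw [← he] at h1
    have := h.disj j _ _ (ha.mem j (by omega)) h1
    fin_cases i <;> simp [lay] at this <;> omega
  have hinj : ∀ i l i' l', l < t → l' < t → c i l = c i' l' → i = i' ∧ l = l' := by
    intro i l i' l' hl hl' he
    have h1 := hmem i l hl
    rw [he] at h1
    have hd := h.disj _ _ _ h1 (hmem i' l' hl')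
    fin_cases i <;> fin_cases i' <;> simp [lay] at hd ⊢ <;> try omega
    · subst hd
      exact hne (j + 1 + l) (by omega) (by omega) he
    · subst hd
      exact hne (j + 1 + l) (by omega) (by omega) he.symm
  have hstep : ∀ i l, l + 1 < t → G.Adj (c i l) (c i (l + 1)) := by
    intro i l hl
    fin_cases i
    · exact ha.adj (j + 1 + l) (by omega)
    · exact hb.adj (j + 1 + l) (by omega)
    · have := ha.adj (j - 1 - (l + 1)) (by omega)
      have e : j - 1 - (l + 1) + 1 = j - 1 - l := by omega
      rw [e] at this
      exact this.symm
  have hadj : ∀ i l i' l', l < t → l' < t → G.Adj (c i l) (c i' l') →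
      i = i' ∧ (l + 1 = l' ∨ l' + 1 = l) := by
    intro i l i' l' hl hl' hadj
    have hd := h.ind _ _ _ (hmem i l hl) _ (hmem i' l' hl') hadj
    fin_cases i <;> fin_cases i' <;> simp [lay] at hd ⊢ <;> try omega
    · rcases hd with hd | hd
      · obtain rfl : l = l' + 1 := by omega
        exact hc2 (j + 1 + l') (by omega) (by omega) hadj.symm
      · obtain rfl : l' = l + 1 := by omega
        exact hc1 (j + 1 + l) (by omega) (by omega) hadj
    · rcases hd with hd | hd
      · obtain rfl : l = l' + 1 := by omega
        exact hc1 (j + 1 + l') (by omega) (by omega) hadj.symm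
      · obtain rfl : l' = l + 1 := by omega
        exact hc2 (j + 1 + l) (by omega) (by omega) hadj
  let f : Option (Fin 3 × Fin t) → V := fun o => match o with
    | none => a j
    | some (i, l) => c i l
  have hf : Function.Injective f := by
    intro u v huv
    match u, v with
    | none, none => rfl
    | none, some (i, l) => exact absurd huv (hcne i l l.2)
    | some (i, l), none => exact absurd huv.symm (hcne i l l.2)
    | some (i, l), some (i', l') =>
      obtain ⟨h1, h2⟩ := hinj i l i' l' l.2 l'.2 huv
      rw [h1, Fin.ext h2]
  refine ⟨⟨⟨f, hf⟩, ?_⟩⟩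
  intro u v
  show G.Adj (f u) (f v) ↔ _
  unfold subdividedClaw
  rw [SimpleGraph.fromRel_adj]
  match u, v with
  | none, none => simp
  | none, some (i, l) => simpa [f] using hc0 i l l.2
  | some (i, l), none => simpa [f, G.adj_comm] using hc0 i l l.2
  | some (i, l), some (i', l') =>
    constructor
    · intro hh
      obtain ⟨h1, h2⟩ := hadj i l i' l' l.2 l'.2 hh
      refine ⟨?_, ?_⟩
      · intro he
        rw [he] at hh
        exact G.loopless.irrefl _ hh
      · rcases h2 with h2 | h2
        · exact Or.inl ⟨h1, h2⟩
        · exact Or.inr ⟨h1.symm, h2⟩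
    · rintro ⟨-, ⟨rfl, h2⟩ | ⟨rfl, h2⟩⟩
      · have := hstep i l (by omega)
        rw [h2] at this
        exact this
      · have := hstep i' l' (by omega)
        rw [h2] at this
        exact this.symm

/-- Vertices reachable by a walk of length at most `k`. -/
noncomputable def ball {V : Type} [Fintype V] (G : SimpleGraph V) (k : ℕ) (x : V) : Finset V :=
  Finset.univ.filter (fun y => ∃ p : G.Walk x y, p.length ≤ k)

lemma card_nbr {V : Type} [Fintype V] {G : SimpleGraph V} {Δ : ℕ}
    (hΔ : ∀ v : V, (G.neighborSet v).ncard ≤ Δ) (x : V) :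
    (Finset.univ.filter (fun y => G.Adj x y)).card ≤ Δ := by
  have := hΔ x
  rw [Set.ncard_eq_toFinset_card'] at this
  refine le_trans (le_of_eq ?_) this
  congr 1
  ext y
  simp

lemma card_ball {V : Type} [Fintype V] {G : SimpleGraph V} {Δ : ℕ}
    (hΔ : ∀ v : V, (G.neighborSet v).ncard ≤ Δ) (k : ℕ) :
    ∀ x, (ball G k x).card ≤ (Δ + 1) ^ k := by
  induction k with
  | zero =>
    intro x
    have : ball G 0 x ⊆ {x} := by
      intro y hy
      simp only [ball, Finset.mem_filter, Finset.mem_univ, true_and] at hy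
      obtain ⟨p, hp⟩ := hy
      have := SimpleGraph.Walk.eq_of_length_eq_zero (p := p) (by omega)
      simp [this]
    simpa using Finset.card_le_card this
  | succ k ih =>
    intro x
    have : ball G (k + 1) x ⊆
        (insert x (Finset.univ.filter (fun y => G.Adj x y))).biUnion (ball G k) := by
      intro y hy
      simp only [ball, Finset.mem_filter, Finset.mem_univ, true_and] at hy
      obtain ⟨p, hp⟩ := hy
      rw [Finset.mem_biUnion]
      cases p with
      | nil => exact ⟨x, by simp, by
          simp only [ball, Finset.mem_filter, Finset.mem_univ, true_and]
          exact ⟨SimpleGraph.Walk.nil, by simp⟩⟩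
      | @cons _ z _ hz q =>
        refine ⟨z, by simp [hz], ?_⟩
        simp only [ball, Finset.mem_filter, Finset.mem_univ, true_and]
        exact ⟨q, by simpa using hp⟩
    refine (Finset.card_le_card this).trans ?_
    refine (Finset.card_biUnion_le_card_mul _ _ _ (fun z _ => ih z)).trans ?_
    rw [pow_succ, mul_comm]
    refine Nat.mul_le_mul_left _ ?_
    refine (Finset.card_insert_le _ _).trans ?_
    have := card_nbr hΔ x
    omega

lemma Chain.walk {V : Type} {G : SimpleGraph V} {S : ℕ → Finset V} {n : ℕ} {x : V}
    {a : ℕ → V} (ha : Chain G S n x a) (i : ℕ) (k : ℕ) (hk : i + k ≤ n) :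
    ∃ p : G.Walk (a i) (a (i + k)), p.length = k := by
  induction k with
  | zero => exact ⟨SimpleGraph.Walk.nil, rfl⟩
  | succ k ih =>
    obtain ⟨p, hp⟩ := ih (by omega)
    exact ⟨p.concat (ha.adj (i + k) (by omega)), by simp [hp]⟩

lemma Chain.walk' {V : Type} {G : SimpleGraph V} {S : ℕ → Finset V} {n : ℕ} {x : V}
    {a : ℕ → V} (ha : Chain G S n x a) (i : ℕ) (hi : i ≤ n) :
    ∃ p : G.Walk (a i) x, p.length = n - i := by
  have := ha.walk i (n - i) (by omega)
  have e : i + (n - i) = n := by omega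
  rw [e, ha.last] at this
  exact this

lemma card_small {V : Type} [Fintype V] {G : SimpleGraph V} {S : ℕ → Finset V}
    (h : Layered G S) {Δ : ℕ} (hΔ : ∀ v : V, (G.neighborSet v).ncard ≤ Δ) (n : ℕ) :
    (S n).card ≤ (Δ + 1) ^ n := by
  by_cases h0 : (S n) = ∅
  · simp [h0]
  obtain ⟨x, hx⟩ := Finset.nonempty_iff_ne_empty.mpr h0
  obtain ⟨a, ha⟩ := exists_chain h n x hx
  refine le_trans (Finset.card_le_card ?_) (card_ball hΔ n (a 0))
  intro y hy
  obtain ⟨b, hb⟩ := exists_chain h n y hy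
  have e := h.root _ (ha.mem 0 (by omega)) _ (hb.mem 0 (by omega))
  obtain ⟨p, hp⟩ := hb.walk' 0 (by omega)
  simp only [ball, Finset.mem_filter, Finset.mem_univ, true_and]
  rw [e]
  exact ⟨p, by omega⟩

/-- uniform bound on the size of layers -/
def M (t Δ : ℕ) : ℕ := (Δ + 1) ^ (2 * t) * (Δ + 1) ^ t

lemma card_layer {V : Type} [Fintype V] {G : SimpleGraph V} {S : ℕ → Finset V}
    (h : Layered G S) {t Δ : ℕ} (hfree : IsEmpty (subdividedClaw t ↪g G))
    (hΔ : ∀ v : V, (G.neighborSet v).ncard ≤ Δ) (n : ℕ) :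
    (S n).card ≤ M t Δ := by
  rcases le_total n t with hn | hn
  · refine (card_small h hΔ n).trans ?_
    refine (Nat.pow_le_pow_right (by omega) hn).trans ?_
    exact Nat.le_mul_of_pos_left _ (by positivity)
  have hch : ∀ x, ∃ a : ℕ → V, x ∈ S n → Chain G S n x a := by
    intro x
    by_cases hx : x ∈ S n
    · obtain ⟨a, ha⟩ := exists_chain h n x hx
      exact ⟨a, fun _ => ha⟩
    · exact ⟨fun _ => x, fun h => absurd h hx⟩
  choose a ha using hch
  have hfib : ∀ v ∈ (S n).image (fun x => a x t),
      ((S n).filter (fun x => a x t = v)).card ≤ (Δ + 1) ^ (2 * t) := by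
    intro v hv
    rw [Finset.mem_image] at hv
    obtain ⟨x, hx, rfl⟩ := hv
    refine le_trans (Finset.card_le_card ?_) (card_ball hΔ (2 * t) x)
    intro y hy
    rw [Finset.mem_filter] at hy
    obtain ⟨hy, hyt⟩ := hy
    let P : ℕ → Prop := fun i => ∃ a' b', Chain G S n x a' ∧ Chain G S n y b' ∧ a' i = b' i
    have hPt : P t := ⟨a x, a y, ha x hx, ha y hy, hyt.symm⟩
    have hj : P (Nat.findGreatest P n) := Nat.findGreatest_spec hn hPt
    have hjt : t ≤ Nat.findGreatest P n := Nat.le_findGreatest hn hPt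
    have hjn : Nat.findGreatest P n ≤ n := Nat.findGreatest_le n
    have hjmax : ∀ i, Nat.findGreatest P n < i → i ≤ n → ¬ P i :=
      fun i h1 h2 => Nat.findGreatest_is_greatest h1 h2
    generalize Nat.findGreatest P n = j at *
    obtain ⟨a', b', ha', hb', hab⟩ := hj
    have hlt : n < j + t := by
      by_contra hcon
      obtain ⟨e⟩ := exists_claw (t := t) h ha' hb' hab hjt (by omega)
        (fun i h1 h2 a'' b'' h3 h4 h5 => hjmax i h1 h2 ⟨a'', b'', h3, h4, h5⟩)
      exact hfree.false e
    obtain ⟨p, hp⟩ := ha'.walk' j hjn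
    have hwq := hb'.walk' j hjn
    rw [← hab] at hwq
    obtain ⟨q, hq⟩ := hwq
    simp only [ball, Finset.mem_filter, Finset.mem_univ, true_and]
    refine ⟨p.reverse.append q, ?_⟩
    rw [SimpleGraph.Walk.length_append, SimpleGraph.Walk.length_reverse]
    omega
  refine (Finset.card_le_mul_card_image (S n) _ hfib).trans ?_
  refine Nat.mul_le_mul_left _ ?_
  refine le_trans (Finset.card_le_card ?_) (card_small h hΔ t)
  intro v hv
  rw [Finset.mem_image] at hv
  obtain ⟨x, hx, rfl⟩ := hv
  exact (ha x hx).mem t hn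

/-- Neighbourhood of `T` within `W`. -/
noncomputable def nb {V : Type} (G : SimpleGraph V) (W T : Finset V) : Finset V :=
  W.filter (fun w => ∃ u ∈ T, G.Adj u w)

/-- Independence of a finite set. -/
def Ind {V : Type} (G : SimpleGraph V) (T : Finset V) : Prop :=
  ∀ u ∈ T, ∀ v ∈ T, ¬ G.Adj u v

lemma Z_rec {V : Type} [Fintype V] (G : SimpleGraph V) (lam : ℂ) (W A : Finset V)
    (hA : A ⊆ W) :
    indepPolyOn G (fun _ => lam) W = ∑ T ∈ A.powerset,
      if Ind G T then lam ^ T.card * indepPolyOn G (fun _ => lam) ((W \ A) \ nb G (W \ A) T)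
      else 0 := by
  have h1 : indepPolyOn G (fun _ => lam) W =
      ∑ p ∈ A.powerset ×ˢ (W \ A).powerset,
        if Ind G (p.1 ∪ p.2) then lam ^ p.1.card * lam ^ p.2.card else 0 := by
    unfold indepPolyOn
    refine Finset.sum_nbij' (fun S => (S ∩ A, S \ A)) (fun p => p.1 ∪ p.2) ?_ ?_ ?_ ?_ ?_
    · intro S hS
      simp only [Finset.mem_powerset, Finset.mem_product] at hS ⊢
      exact ⟨Finset.inter_subset_right, Finset.sdiff_subset_sdiff hS subset_rfl⟩
    · intro p hp
      simp only [Finset.mem_powerset, Finset.mem_product] at hp ⊢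
      exact Finset.union_subset (hp.1.trans hA) (hp.2.trans Finset.sdiff_subset)
    · intro S hS
      ext x; simp; tauto
    · rintro ⟨P, Q⟩ hp
      simp only [Finset.mem_powerset, Finset.mem_product] at hp
      have hP := hp.1
      have hQ := hp.2
      ext x
      · have := @hP x; have := @hQ x; simp at *; tauto
      · have := @hP x; have := @hQ x; simp at *; tauto
    · intro S hS
      have e : S ∩ A ∪ S \ A = S := by ext x; simp; tauto
      have ec : (S ∩ A).card + (S \ A).card = S.card := Finset.card_inter_add_card_sdiff S A
      simp only [e]
      rw [← pow_add, ec, Finset.prod_const]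
      unfold Ind
      congr
  rw [h1, Finset.sum_product]
  refine Finset.sum_congr rfl ?_
  intro T hT
  rw [Finset.mem_powerset] at hT
  by_cases hind : Ind G T
  · rw [if_pos hind]
    unfold indepPolyOn
    rw [Finset.mul_sum]
    symm
    refine Finset.sum_subset_zero_on_sdiff ?_ ?_ ?_
    · exact Finset.powerset_mono.mpr Finset.sdiff_subset
    · intro Q hQ
      rw [Finset.mem_sdiff, Finset.mem_powerset, Finset.mem_powerset] at hQ
      obtain ⟨hQ1, hQ2⟩ := hQ
      rw [if_neg]
      intro hI
      apply hQ2
      intro q hq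
      rw [Finset.mem_sdiff]
      refine ⟨hQ1 hq, ?_⟩
      intro hn
      obtain ⟨-, u, hu, huq⟩ := Finset.mem_filter.mp hn
      exact hI u (by simp [hu]) q (by simp [hq]) huq
    · intro Q hQ
      rw [Finset.mem_powerset] at hQ
      have hiff : Ind G (T ∪ Q) ↔ (∀ u ∈ Q, ∀ v ∈ Q, ¬ G.Adj u v) := by
        constructor
        · intro hI u hu v hv
          exact hI u (by simp [hu]) v (by simp [hv])
        · intro hI
          have hcross : ∀ u ∈ T, ∀ v ∈ Q, ¬ G.Adj u v := by
            intro u hu v hv huv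
            have := Finset.mem_sdiff.mp (hQ hv)
            exact this.2 (Finset.mem_filter.mpr ⟨this.1, u, hu, huv⟩)
          intro u hu v hv
          rw [Finset.mem_union] at hu hv
          rcases hu with hu | hu <;> rcases hv with hv | hv
          · exact hind u hu v hv
          · exact hcross u hu v hv
          · intro huv; exact hcross v hv u hu huv.symm
          · exact hI u hu v hv
      by_cases hq : (∀ u ∈ Q, ∀ v ∈ Q, ¬ G.Adj u v)
      · rw [if_pos hq, if_pos (hiff.mpr hq), Finset.prod_const]
      · rw [if_neg hq, if_neg (fun hh => hq (hiff.mp hh)), mul_zero]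
  · rw [if_neg hind]
    refine Finset.sum_eq_zero ?_
    intro Q _
    rw [if_neg]
    intro hI
    exact hind (fun u hu v hv => hI u (by simp [hu]) v (by simp [hv]))

/-- Valid configurations of the recursion. -/
structure Valid {V : Type} (G : SimpleGraph V) (B : ℕ) (n : ℕ) (S : ℕ → Finset V)
    (W A : Finset V) : Prop where
  sub : A ⊆ W
  card : A.card ≤ B
  lay : ∀ T ⊆ A, Ind G T → Layered G (Function.update S n T)
  emp : ∀ i, n ≤ i → S i = ∅
  sep : ∀ i, ∀ u ∈ S i, ∀ w ∈ W \ A, u ≠ w ∧ ¬ G.Adj u w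

lemma valid_start {V : Type} (G : SimpleGraph V) (B : ℕ) (hB : 1 ≤ B) (W : Finset V)
    (v : V) (hv : v ∈ W) : Valid G B 0 (fun _ => ∅) W {v} := by
  refine ⟨by simpa using hv, by simpa using hB, ?_, by simp, by simp⟩
  intro T hT hI
  have key : ∀ i, ∀ x ∈ Function.update (fun _ => (∅ : Finset V)) 0 T i, i = 0 ∧ x = v := by
    intro i x hx
    by_cases hi : i = 0
    · subst hi
      simp only [Function.update_self] at hx
      exact ⟨rfl, by simpa using hT hx⟩
    · simp [Function.update_of_ne hi] at hx
  refine ⟨?_, ?_, ?_, ?_⟩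
  · intro x hx y hy
    rw [(key _ x hx).2, (key _ y hy).2]
  · intro i x hx
    have := (key _ x hx).1
    omega
  · intro i j x hx y hy hxy
    rw [(key _ x hx).2, (key _ y hy).2] at hxy
    exact absurd hxy (G.loopless.irrefl _)
  · intro i j x hx hy
    rw [(key _ x hx).1, (key _ x hy).1]

lemma card_nb {V : Type} [Fintype V] {G : SimpleGraph V} {Δ : ℕ}
    (hΔ : ∀ v : V, (G.neighborSet v).ncard ≤ Δ) (W T : Finset V) :
    (nb G W T).card ≤ T.card * Δ := by
  have : nb G W T ⊆ T.biUnion (fun u => Finset.univ.filter (fun y => G.Adj u y)) := by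
    intro w hw
    obtain ⟨-, u, hu, huw⟩ := Finset.mem_filter.mp hw
    rw [Finset.mem_biUnion]
    exact ⟨u, hu, by simpa using huw⟩
  exact (Finset.card_le_card this).trans
    (Finset.card_biUnion_le_card_mul _ _ _ (fun u _ => card_nbr hΔ u))

lemma Valid.next {V : Type} [Fintype V] {G : SimpleGraph V} {t Δ n : ℕ} {S : ℕ → Finset V}
    {W A : Finset V} (h : Valid G (M t Δ * Δ + 1) n S W A)
    (hfree : IsEmpty (subdividedClaw t ↪g G))
    (hΔ : ∀ v : V, (G.neighborSet v).ncard ≤ Δ) {T : Finset V} (hT : T ⊆ A) (hI : Ind G T) :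
    T.card ≤ M t Δ ∧ Valid G (M t Δ * Δ + 1) (n + 1) (Function.update S n T) (W \ A)
      (nb G (W \ A) T) := by
  have hL := h.lay T hT hI
  have hcard : T.card ≤ M t Δ := by
    have := card_layer hL hfree hΔ n
    simpa using this
  refine ⟨hcard, Finset.filter_subset _ _, ?_, ?_, ?_, ?_⟩
  · exact (card_nb hΔ _ _).trans ((Nat.mul_le_mul_right _ hcard).trans (Nat.le_succ _))
  · intro T' hT' hI'
    set S' := Function.update S n T with hS'
    have hS'n : S' n = T := by simp [hS']
    have hS'lt : ∀ i, i ≠ n → S' i = S i := fun i hi => by simp [hS', Function.update_of_ne hi]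
    have hS'emp : ∀ i, n + 1 ≤ i → S' i = ∅ := fun i hi => by
      rw [hS'lt i (by omega)]; exact h.emp i (by omega)
    have hU : ∀ i x, x ∈ Function.update S' (n + 1) T' i → (i = n + 1 ∧ x ∈ T') ∨
        (i ≤ n ∧ x ∈ S' i) := by
      intro i x hx
      by_cases hi : i = n + 1
      · subst hi
        left; simpa using hx
      · rw [Function.update_of_ne hi] at hx
        right
        refine ⟨?_, hx⟩
        by_contra hcon
        rw [hS'emp i (by omega)] at hx
        simp at hx
    have hWA : ∀ x ∈ T', x ∈ W \ A := fun x hx => (Finset.mem_filter.mp (hT' hx)).1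
    have hne : ∀ i, ∀ u ∈ S' i, ∀ x ∈ T', u ≠ x := by
      intro i u hu x hx
      by_cases hi : i = n
      · subst hi
        rw [hS'n] at hu
        rintro rfl
        exact (Finset.mem_sdiff.mp (hWA _ hx)).2 (hT hu)
      · rw [hS'lt i hi] at hu
        exact (h.sep i u hu x (hWA x hx)).1
    have hna : ∀ i, ∀ u ∈ S' i, ∀ x ∈ T', G.Adj u x → i = n := by
      intro i u hu x hx hux
      by_contra hi
      rw [hS'lt i hi] at hu
      exact (h.sep i u hu x (hWA x hx)).2 hux
    refine ⟨?_, ?_, ?_, ?_⟩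
    · intro x hx y hy
      rcases hU _ x hx with ⟨h1, -⟩ | ⟨-, h1⟩
      · omega
      rcases hU _ y hy with ⟨h2, -⟩ | ⟨-, h2⟩
      · omega
      exact hL.root x h1 y h2
    · intro i x hx
      rcases hU _ x hx with ⟨h1, hx'⟩ | ⟨h1, hx'⟩
      · obtain rfl : i = n := by omega
        obtain ⟨-, u, hu, hux⟩ := Finset.mem_filter.mp (hT' hx')
        refine ⟨u, ?_, hux⟩
        rw [Function.update_of_ne (by omega), hS'n]
        exact hu
      · obtain ⟨y, hy, hyx⟩ := hL.par i x hx'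
        refine ⟨y, ?_, hyx⟩
        rw [Function.update_of_ne (by omega)]
        exact hy
    · intro i j x hx y hy hxy
      rcases hU _ x hx with ⟨h1, hx'⟩ | ⟨h1, hx'⟩ <;> rcases hU _ y hy with ⟨h2, hy'⟩ | ⟨h2, hy'⟩
      · exact absurd hxy (hI' x hx' y hy')
      · have := hna j y hy' x hx' hxy.symm
        omega
      · have := hna i x hx' y hy' hxy
        omega
      · exact hL.ind i j x hx' y hy' hxy
    · intro i j x hx hy
      rcases hU _ x hx with ⟨h1, hx'⟩ | ⟨h1, hx'⟩ <;> rcases hU _ x hy with ⟨h2, hy'⟩ | ⟨h2, hy'⟩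
      · omega
      · exact absurd rfl (hne j x hy' x hx')
      · exact absurd rfl (hne i x hx' x hy')
      · exact hL.disj i j x hx' hy'
  · intro i hi
    rw [Function.update_of_ne (by omega)]
    exact h.emp i (by omega)
  · intro i u hu w hw
    rw [Finset.mem_sdiff] at hw
    by_cases hi : i = n
    · subst hi
      rw [Function.update_self] at hu
      refine ⟨?_, ?_⟩
      · rintro rfl
        exact (Finset.mem_sdiff.mp hw.1).2 (hT hu)
      · intro huw
        exact hw.2 (Finset.mem_filter.mpr ⟨hw.1, u, hu, huw⟩)
    · rw [Function.update_of_ne hi] at hu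
      exact h.sep i u hu w hw.1

lemma half_plane {μ r : ℂ} {ε : ℝ} (hμ : ‖μ‖ < μ.re + ε) (hr : 1 / 2 ≤ r.re) :
    -ε ≤ (μ * r⁻¹).re := by
  have hr0 : r ≠ 0 := by
    rintro rfl
    norm_num at hr
  have hn : ‖r⁻¹ - 1‖ ≤ 1 := by
    have e : r⁻¹ - 1 = (1 - r) / r := by field_simp
    rw [e, norm_div, div_le_one (norm_pos_iff.mpr hr0)]
    rw [← sq_le_sq₀ (norm_nonneg _) (norm_nonneg _), ← Complex.normSq_eq_norm_sq,
      ← Complex.normSq_eq_norm_sq, Complex.normSq_apply, Complex.normSq_apply]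
    simp only [Complex.sub_re, Complex.sub_im, Complex.one_re, Complex.one_im]
    nlinarith
  have e : μ * r⁻¹ = μ + μ * (r⁻¹ - 1) := by ring
  have h1 : |(μ * (r⁻¹ - 1)).re| ≤ ‖μ‖ := by
    refine (Complex.abs_re_le_norm _).trans ?_
    rw [norm_mul]
    exact mul_le_of_le_one_right (norm_nonneg _) hn
  rw [e, Complex.add_re]
  have := (abs_le.mp h1).1
  linarith

lemma main {V : Type} [Fintype V] {G : SimpleGraph V} {t Δ : ℕ}
    (hfree : IsEmpty (subdividedClaw t ↪g G))
    (hΔ : ∀ v : V, (G.neighborSet v).ncard ≤ Δ) {lam : ℂ}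
    (hlam : ∀ j ≤ M t Δ, ‖lam ^ j‖ < (lam ^ j).re + 1 / (2 * 2 ^ (M t Δ * Δ + 1))) :
    ∀ N : ℕ, ∀ W : Finset V, W.card ≤ N → indepPolyOn G (fun _ => lam) W ≠ 0 ∧
      ∀ n S A, Valid G (M t Δ * Δ + 1) n S W A →
        1 / 2 ≤ (indepPolyOn G (fun _ => lam) W / indepPolyOn G (fun _ => lam) (W \ A)).re := by
  intro N
  induction N with
  | zero =>
    intro W hW
    obtain rfl : W = ∅ := by simpa using hW
    have e : indepPolyOn G (fun _ => lam) ∅ = 1 := by simp [indepPolyOn]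
    refine ⟨by simp [e], ?_⟩
    intro n S A h
    simp [e]
    norm_num
  | succ N ih =>
    intro W hW
    have hratio : ∀ n S A, A.Nonempty → Valid G (M t Δ * Δ + 1) n S W A →
        1 / 2 ≤ (indepPolyOn G (fun _ => lam) W / indepPolyOn G (fun _ => lam) (W \ A)).re := by
      intro n S A hne h
      have hlt : (W \ A).card ≤ N := by
        have := Finset.card_sdiff_add_card_eq_card h.sub
        have := hne.card_pos
        omega
      obtain ⟨hZ, hQ⟩ := ih (W \ A) hlt
      rw [Z_rec G lam W A h.sub, Finset.sum_div,
        ← Finset.add_sum_erase _ _ (Finset.empty_mem_powerset A), Complex.add_re]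
      have h0 : Ind G (∅ : Finset V) := by simp [Ind]
      have hnb : nb G (W \ A) ∅ = ∅ := by simp [nb]
      rw [if_pos h0, hnb, Finset.sdiff_empty, Finset.card_empty, pow_zero, one_mul,
        div_self hZ, Complex.one_re, Complex.re_sum]
      have hb : ∀ T ∈ A.powerset.erase ∅, -(1 / (2 * 2 ^ (M t Δ * Δ + 1)) : ℝ) ≤
          ((if Ind G T then lam ^ T.card *
            indepPolyOn G (fun _ => lam) ((W \ A) \ nb G (W \ A) T) else 0) /
            indepPolyOn G (fun _ => lam) (W \ A)).re := by
        intro T hT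
        have hTA : T ⊆ A := Finset.mem_powerset.mp (Finset.mem_of_mem_erase hT)
        by_cases hI : Ind G T
        · rw [if_pos hI]
          obtain ⟨hc, hv⟩ := h.next hfree hΔ hTA hI
          have := half_plane (hlam _ hc) (hQ _ _ _ hv)
          rw [inv_div, ← mul_div_assoc] at this
          exact this
        · rw [if_neg hI, zero_div, Complex.zero_re, neg_nonpos]
          positivity
      have hs := Finset.card_nsmul_le_sum _ _ _ hb
      have hcard : ((A.powerset.erase ∅).card : ℝ) ≤ 2 ^ (M t Δ * Δ + 1) := by
        have h1 : (A.powerset.erase ∅).card ≤ 2 ^ (M t Δ * Δ + 1) := by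
          refine (Finset.card_le_card (Finset.erase_subset _ _)).trans ?_
          rw [Finset.card_powerset]
          exact Nat.pow_le_pow_right (by norm_num) h.card
        exact_mod_cast h1
      rw [nsmul_eq_mul] at hs
      have hpos : (0 : ℝ) < 2 ^ (M t Δ * Δ + 1) := by positivity
      have h2 : ((A.powerset.erase ∅).card : ℝ) * (1 / (2 * 2 ^ (M t Δ * Δ + 1))) ≤ 1 / 2 := by
        calc _ ≤ (2 : ℝ) ^ (M t Δ * Δ + 1) * (1 / (2 * 2 ^ (M t Δ * Δ + 1))) := by gcongr
          _ = 1 / 2 := by field_simp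
      linarith
    have hZW : indepPolyOn G (fun _ => lam) W ≠ 0 := by
      rcases W.eq_empty_or_nonempty with rfl | ⟨v, hv⟩
      · simp [indepPolyOn]
      · intro hz
        have := hratio 0 _ {v} (by simp) (valid_start G _ (by omega) W v hv)
        rw [hz, zero_div, Complex.zero_re] at this
        norm_num at this
    refine ⟨hZW, ?_⟩
    intro n S A h
    rcases A.eq_empty_or_nonempty with rfl | hne
    · rw [Finset.sdiff_empty, div_self hZW, Complex.one_re]
      norm_num
    · exact hratio n S A hne h

end SubClaw

/-- for all integers `t ≥ 1` and `Δ ≥ 3` there is an open set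
`F ⊆ ℂ` containing the ray `[0,∞)` such that the univariate independence
polynomial of every finite `S_{t,t,t}`-free simple graph of maximum degree at
most `Δ` is nonzero at every `λ ∈ F`. -/
theorem stmt0 (t Δ : ℕ) (ht : 1 ≤ t) (hΔ : 3 ≤ Δ) :
    ∃ F : Set ℂ, IsOpen F ∧ (∀ x : ℝ, 0 ≤ x → (x : ℂ) ∈ F) ∧
      ∀ (V : Type) [Fintype V] (G : SimpleGraph V),
        IsEmpty (subdividedClaw t ↪g G) →
        (∀ v : V, (G.neighborSet v).ncard ≤ Δ) →
        ∀ lam ∈ F, indepPoly G (fun _ => lam) ≠ 0 := by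
  refine ⟨⋂ j ∈ Finset.range (SubClaw.M t Δ + 1), {z : ℂ | ‖z ^ j‖ < (z ^ j).re +
    1 / (2 * 2 ^ (SubClaw.M t Δ * Δ + 1))}, ?_, ?_, ?_⟩
  · refine isOpen_biInter_finset (fun j _ => ?_)
    exact isOpen_lt (by fun_prop) (by fun_prop)
  · intro x hx
    simp only [Set.mem_iInter, Set.mem_ofPred_eq]
    intro j _
    rw [← Complex.ofReal_pow, Complex.ofReal_re, Complex.norm_real, Real.norm_eq_abs,
      abs_of_nonneg (by positivity)]
    have : (0 : ℝ) < 1 / (2 * 2 ^ (SubClaw.M t Δ * Δ + 1)) := by positivity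
    linarith
  · intro V _ G hfree hdeg lam hlam
    simp only [Set.mem_iInter, Set.mem_ofPred_eq, Finset.mem_range] at hlam
    exact (SubClaw.main hfree hdeg (fun j hj => hlam j (by omega)) _ Finset.univ le_rfl).1
end

section
/- For every real λ₀ > 0 and all integers t ≥ 1 and Δ ≥ 3, there exists an open set F ⊆ ℂ containing the interval [0, λ₀] such that for every finite S_{t,t,t}-free simple graph G = (V,E) of maximum degree at most Δ and every assignment of weights λ = (λ_v)_{v∈V} with λ_v ∈ F for all v, the multivariate independence polynomial satisfies Z_{G,λ} ≠ 0. -/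
attribute [local instance] Classical.propDecidable

/-! ## Algebraic part: the partition function over a general commutative ring -/

/-- `S` is independent in `G`. -/
def IsInd {V : Type} (G : SimpleGraph V) (S : Finset V) : Prop :=
  ∀ u ∈ S, ∀ v ∈ S, ¬ G.Adj u v

/-- Partition function with values in a general commutative ring. -/
noncomputable def ZZ {V R : Type} [CommRing R] (G : SimpleGraph V) (w : V → R) (W : Finset V) : R :=
  ∑ S ∈ W.powerset, if IsInd G S then ∏ v ∈ S, w v else 0

/-- Vertices of `W` having a neighbour in `S`. -/
noncomputable def nbr {V : Type} (G : SimpleGraph V) (S W : Finset V) : Finset V :=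
  W.filter (fun v => ∃ s ∈ S, G.Adj s v)

theorem mem_nbr {V : Type} (G : SimpleGraph V) (S W : Finset V) (v : V) :
    v ∈ nbr G S W ↔ v ∈ W ∧ ∃ s ∈ S, G.Adj s v := by
  simp [nbr]

theorem ZZ_split {V R : Type} [CommRing R] (G : SimpleGraph V) (w : V → R) (W K : Finset V)
    (hK : K ⊆ W) :
    ZZ G w W = ∑ S ∈ K.powerset, if IsInd G S then
      (∏ v ∈ S, w v) * ZZ G w ((W \ K) \ nbr G S (W \ K)) else 0 := by
  have h1 : ZZ G w W = ∑ p ∈ K.powerset ×ˢ (W \ K).powerset,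
      if IsInd G (p.1 ∪ p.2) then ∏ v ∈ p.1 ∪ p.2, w v else 0 := by
    unfold ZZ
    refine Finset.sum_bij' (fun S _ => (S ∩ K, S \ K)) (fun p _ => p.1 ∪ p.2) ?_ ?_ ?_ ?_ ?_
    · intro S hS
      simp only [Finset.mem_powerset, Finset.mem_product] at *
      exact ⟨Finset.inter_subset_right, Finset.sdiff_subset_sdiff hS (le_refl _)⟩
    · intro p hp
      simp only [Finset.mem_powerset, Finset.mem_product] at *
      exact Finset.union_subset (hp.1.trans hK) (hp.2.trans Finset.sdiff_subset)
    · intro S hS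
      ext v
      simp only [Finset.mem_union, Finset.mem_inter, Finset.mem_sdiff]
      tauto
    · rintro ⟨A, B⟩ hp
      simp only [Finset.mem_powerset, Finset.mem_product] at hp
      have hB : ∀ v ∈ B, v ∉ K := fun v hv => (Finset.mem_sdiff.1 (hp.2 hv)).2
      have hA : ∀ v ∈ A, v ∈ K := fun v hv => hp.1 hv
      ext v
      · simp only [Finset.mem_union, Finset.mem_inter]
        grind
      · simp only [Finset.mem_union, Finset.mem_sdiff]
        grind
    · intro S hS
      have : S ∩ K ∪ S \ K = S := by
        ext v
        simp only [Finset.mem_union, Finset.mem_inter, Finset.mem_sdiff]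
        tauto
      simp only [this]
  rw [h1, Finset.sum_product]
  refine Finset.sum_congr rfl ?_
  intro A hA
  rw [Finset.mem_powerset] at hA
  split_ifs with hind
  · unfold ZZ
    rw [Finset.mul_sum]
    symm
    have hsub : ((W \ K) \ nbr G A (W \ K)).powerset ⊆ (W \ K).powerset :=
      Finset.powerset_mono.2 Finset.sdiff_subset
    refine (Finset.sum_congr rfl ?_).trans (Finset.sum_subset hsub ?_)
    · intro B hB
      rw [Finset.mem_powerset] at hB
      have hdis : Disjoint A B := by
        rw [Finset.disjoint_left]
        intro v hv hv'
        have := hB hv'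
        simp only [Finset.mem_sdiff] at this
        exact this.1.2 (hA hv)
      have hna : ∀ a ∈ A, ∀ b ∈ B, ¬ G.Adj a b := by
        intro a ha b hb hab
        have := hB hb
        rw [Finset.mem_sdiff, mem_nbr] at this
        exact this.2 ⟨this.1, a, ha, hab⟩
      have hiff : IsInd G (A ∪ B) ↔ IsInd G B := by
        constructor
        · intro h u hu v hv
          exact h u (Finset.mem_union_right _ hu) v (Finset.mem_union_right _ hv)
        · intro h u hu v hv
          rcases Finset.mem_union.1 hu with hu | hu <;> rcases Finset.mem_union.1 hv with hv | hv
          · exact hind u hu v hv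
          · exact hna u hu v hv
          · exact fun h' => hna v hv u hu h'.symm
          · exact h u hu v hv
      simp only [hiff]
      split_ifs
      · rw [Finset.prod_union hdis]
      · simp
    · intro B hB hB'
      rw [Finset.mem_powerset] at hB hB'
      rw [if_neg]
      intro h
      apply hB'
      intro b hb
      rw [Finset.mem_sdiff, mem_nbr]
      refine ⟨hB hb, ?_⟩
      rintro ⟨-, a, ha, hab⟩
      exact h a (Finset.mem_union_left _ ha) b (Finset.mem_union_right _ hb) hab
  · refine Finset.sum_eq_zero ?_
    intro B _
    rw [if_neg]
    intro h
    exact hind fun u hu v hv => h u (Finset.mem_union_left _ hu) v (Finset.mem_union_left _ hv)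

theorem ZZ_real_nonneg {V : Type} (G : SimpleGraph V) (x : V → ℝ) (hx : ∀ v, 0 ≤ x v)
    (W : Finset V) : 0 ≤ ZZ G x W := by
  unfold ZZ
  refine Finset.sum_nonneg ?_
  intro S _
  split_ifs
  · exact Finset.prod_nonneg fun v _ => hx v
  · exact le_refl _

theorem ZZ_real_mono {V : Type} (G : SimpleGraph V) (x : V → ℝ) (hx : ∀ v, 0 ≤ x v)
    (W W' : Finset V) (h : W' ⊆ W) : ZZ G x W' ≤ ZZ G x W := by
  unfold ZZ
  refine Finset.sum_le_sum_of_subset_of_nonneg (Finset.powerset_mono.2 h) ?_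
  intro S _ _
  split_ifs
  · exact Finset.prod_nonneg fun v _ => hx v
  · exact le_refl _

theorem ZZ_empty {V R : Type} [CommRing R] (G : SimpleGraph V) (w : V → R) :
    ZZ G w ∅ = 1 := by
  simp [ZZ, IsInd]

theorem ZZ_real_pos {V : Type} (G : SimpleGraph V) (x : V → ℝ) (hx : ∀ v, 0 ≤ x v)
    (W : Finset V) : 0 < ZZ G x W := by
  have := ZZ_real_mono G x hx W ∅ (Finset.empty_subset _)
  rw [ZZ_empty] at this
  linarith

theorem ZZ_real_upper {V : Type} (G : SimpleGraph V) (x : V → ℝ) (hx : ∀ v, 0 ≤ x v)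
    (M : ℝ) (hM : 1 ≤ M) (hxM : ∀ v, x v ≤ M) (b : ℕ)
    (W K : Finset V) (hK : K ⊆ W) (hb : K.card ≤ b) :
    ZZ G x W ≤ (2 * M) ^ b * ZZ G x (W \ K) := by
  have hy := ZZ_real_nonneg G x hx (W \ K)
  rw [ZZ_split G x W K hK]
  have : ∀ S ∈ K.powerset, (if IsInd G S then
      (∏ v ∈ S, x v) * ZZ G x ((W \ K) \ nbr G S (W \ K)) else 0) ≤ M ^ b * ZZ G x (W \ K) := by
    intro S hS
    rw [Finset.mem_powerset] at hS
    split_ifs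
    · refine mul_le_mul ?_ (ZZ_real_mono G x hx _ _ Finset.sdiff_subset)
        (ZZ_real_nonneg G x hx _) (by positivity)
      calc ∏ v ∈ S, x v ≤ ∏ v ∈ S, M := Finset.prod_le_prod (fun v _ => hx v) (fun v _ => hxM v)
        _ = M ^ S.card := by simp
        _ ≤ M ^ b := pow_le_pow_right₀ hM ((Finset.card_le_card hS).trans hb)
    · positivity
  refine (Finset.sum_le_sum this).trans ?_
  rw [Finset.sum_const, Finset.card_powerset, nsmul_eq_mul, mul_pow, mul_assoc]
  push_cast
  refine mul_le_mul_of_nonneg_right ?_ (by positivity)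
  exact pow_le_pow_right₀ (by norm_num) hb

theorem prod_diff {V : Type} (x : V → ℝ) (lam : V → ℂ) (M ε : ℝ) (hM : 1 ≤ M) (hε : 0 ≤ ε)
    (hx : ∀ v, 0 ≤ x v) (hxM : ∀ v, x v ≤ M) (hl : ∀ v, ‖lam v‖ ≤ M)
    (hd : ∀ v, ‖lam v - x v‖ ≤ ε) (S : Finset V) :
    ‖∏ v ∈ S, lam v - ((∏ v ∈ S, x v : ℝ) : ℂ)‖ ≤ S.card * M ^ S.card * ε := by
  induction S using Finset.induction_on with
  | empty => simp
  | insert a S ha ih =>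
    rw [Finset.prod_insert ha, Finset.prod_insert ha, Finset.card_insert_of_notMem ha]
    have hP : ‖((∏ v ∈ S, x v : ℝ) : ℂ)‖ ≤ M ^ S.card := by
      rw [Complex.norm_real, Real.norm_of_nonneg (Finset.prod_nonneg fun v _ => hx v)]
      calc ∏ v ∈ S, x v ≤ ∏ v ∈ S, M := Finset.prod_le_prod (fun v _ => hx v) (fun v _ => hxM v)
        _ = M ^ S.card := by simp
    have e : lam a * ∏ v ∈ S, lam v - ((x a * ∏ v ∈ S, x v : ℝ) : ℂ)
        = lam a * (∏ v ∈ S, lam v - ((∏ v ∈ S, x v : ℝ) : ℂ))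
          + (lam a - x a) * ((∏ v ∈ S, x v : ℝ) : ℂ) := by
      push_cast; ring
    rw [e]
    refine (norm_add_le _ _).trans ?_
    rw [norm_mul, norm_mul]
    have h1 := mul_le_mul (hl a) ih (norm_nonneg _) (by linarith)
    have h2 := mul_le_mul (hd a) hP (norm_nonneg _) hε
    have h3 : M ^ S.card * ε ≤ M ^ (S.card + 1) * ε :=
      mul_le_mul_of_nonneg_right (pow_le_pow_right₀ hM (Nat.le_succ _)) hε
    have h4 : M * (S.card * M ^ S.card * ε) = S.card * M ^ (S.card + 1) * ε := by ring
    have h5 : ((S.card + 1 : ℕ) : ℝ) * M ^ (S.card + 1) * ε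
        = S.card * M ^ (S.card + 1) * ε + M ^ (S.card + 1) * ε := by push_cast; ring
    rw [h5]
    linarith

/-- Ratio of the complex and the real partition functions. -/
noncomputable def rho {V : Type} (G : SimpleGraph V) (x : V → ℝ) (lam : V → ℂ) (W : Finset V) : ℂ :=
  ZZ G lam W / (ZZ G x W : ℝ)

/-- One step of the contraction. -/
theorem contraction {V : Type} (G : SimpleGraph V) (x : V → ℝ) (lam : V → ℂ) (M : ℝ)
    (hM : 1 ≤ M) (hx : ∀ v, 0 ≤ x v) (hxM : ∀ v, x v ≤ M) (b : ℕ) (e p : ℝ) (he : 0 ≤ e)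
    (hp : 0 < p) (hp1 : p ≤ 1) (hpb : p * (2 * M) ^ b ≤ 1) (hep : 2 ^ b * e ≤ p ^ 2 / 4)
    (W K : Finset V) (hK : K ⊆ W) (hb : K.card ≤ b)
    (hpd : ∀ S ⊆ K, ‖∏ v ∈ S, lam v - ((∏ v ∈ S, x v : ℝ) : ℂ)‖ ≤ e)
    (ih : ∀ S ⊆ K, S.Nonempty → IsInd G S →
      ‖rho G x lam (W \ K) - rho G x lam ((W \ K) \ nbr G S (W \ K))‖
        ≤ p / 2 * ‖rho G x lam ((W \ K) \ nbr G S (W \ K))‖) :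
    ‖rho G x lam W - rho G x lam (W \ K)‖ ≤ p / 2 * ‖rho G x lam (W \ K)‖ := by
  set R := rho G x lam (W \ K) with hR
  set y : Finset V → ℝ := ZZ G x with hy
  have ypos : ∀ W, 0 < y W := ZZ_real_pos G x hx
  set T : Finset V → Finset V := fun S => (W \ K) \ nbr G S (W \ K) with hT
  have hz : ∀ U, ZZ G lam U = (y U : ℂ) * rho G x lam U := by
    intro U
    have : (y U : ℂ) ≠ 0 := by exact_mod_cast (ypos U).ne'
    change _ = (y U : ℂ) * (ZZ G lam U / (y U : ℂ))
    rw [mul_div_cancel₀ _ this]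
  have hTe : T ∅ = W \ K := by
    ext v; simp [hT, nbr]
  have main : (y W : ℂ) * (rho G x lam W - R) = ∑ S ∈ K.powerset, if IsInd G S then
      (y (T S) : ℂ) * ((∏ v ∈ S, lam v) * rho G x lam (T S) - ((∏ v ∈ S, x v : ℝ) : ℂ) * R)
      else 0 := by
    rw [mul_sub, ← hz W, ZZ_split G lam W K hK]
    have : (y W : ℂ) = ∑ S ∈ K.powerset, if IsInd G S then
      ((∏ v ∈ S, x v : ℝ) : ℂ) * (y (T S) : ℂ) else 0 := by
      rw [hy, ZZ_split G x W K hK]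
      push_cast
      refine Finset.sum_congr rfl fun S _ => ?_
      split_ifs <;> simp [hT]
    rw [this, Finset.sum_mul, ← Finset.sum_sub_distrib]
    refine Finset.sum_congr rfl fun S _ => ?_
    split_ifs
    · rw [hz]; ring
    · simp
  have hk : 0 < 1 - p / 2 := by linarith
  set c : ℝ := ‖R‖ / (1 - p / 2) with hc
  have hc0 : 0 ≤ c := by positivity
  have bound : ∀ S ∈ K.powerset, ‖(if IsInd G S then
      (y (T S) : ℂ) * ((∏ v ∈ S, lam v) * rho G x lam (T S) - ((∏ v ∈ S, x v : ℝ) : ℂ) * R)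
      else 0)‖ ≤ c * (y W * e) + c * (p / 2) *
        ((if IsInd G S then (∏ v ∈ S, x v) * y (T S) else 0) - if S = ∅ then y (W \ K) else 0) := by
    intro S hS
    rw [Finset.mem_powerset] at hS
    by_cases hne : S = ∅
    · subst hne
      have h0 : IsInd G (∅ : Finset V) := by simp [IsInd]
      rw [if_pos h0, if_pos h0, if_pos rfl, hTe]
      simp only [Finset.prod_empty, hR]
      have := ypos W
      simp
      positivity
    · rw [if_neg hne]
      have hyW := ypos W
      split_ifs with hind
      · have i := ih S hS (Finset.nonempty_iff_ne_empty.2 hne) hind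
        change ‖R - rho G x lam (T S)‖ ≤ p / 2 * ‖rho G x lam (T S)‖ at i
        set Q := rho G x lam (T S) with hQ
        have hQc : ‖Q‖ ≤ c := by
          rw [hc, le_div_iff₀ hk]
          have : ‖Q‖ ≤ ‖R‖ + ‖R - Q‖ := by
            have := norm_sub_le R (R - Q)
            simpa using this
          nlinarith
        set X := ∏ v ∈ S, x v with hX
        have hX0 : 0 ≤ X := Finset.prod_nonneg fun v _ => hx v
        have eq : (∏ v ∈ S, lam v) * Q - (X : ℂ) * R
            = (∏ v ∈ S, lam v - (X : ℂ)) * Q - (X : ℂ) * (R - Q) := by ring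
        rw [norm_mul, eq, Complex.norm_real, Real.norm_of_nonneg (ypos _).le]
        have n1 : ‖(∏ v ∈ S, lam v - (X : ℂ)) * Q - (X : ℂ) * (R - Q)‖ ≤ e * c + X * (p / 2 * c) := by
          refine (norm_sub_le _ _).trans ?_
          rw [norm_mul, norm_mul, Complex.norm_real, Real.norm_of_nonneg hX0]
          refine add_le_add (mul_le_mul (hpd S hS) hQc (norm_nonneg _) he) ?_
          refine mul_le_mul_of_nonneg_left (i.trans ?_) hX0
          exact mul_le_mul_of_nonneg_left hQc (by linarith)
        have hyT : y (T S) ≤ y W :=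
          ZZ_real_mono G x hx _ _ (Finset.sdiff_subset.trans Finset.sdiff_subset)
        calc y (T S) * _ ≤ y (T S) * (e * c + X * (p / 2 * c)) :=
              mul_le_mul_of_nonneg_left n1 (ypos _).le
          _ = y (T S) * (e * c) + y (T S) * (X * (p / 2 * c)) := by ring
          _ ≤ y W * (e * c) + y (T S) * (X * (p / 2 * c)) := by
              have := mul_le_mul_of_nonneg_right hyT (mul_nonneg he hc0)
              linarith
          _ = _ := by ring
      · simp
        positivity
  have s1 : ‖(y W : ℂ) * (rho G x lam W - R)‖ ≤ c * (y W * (2 ^ b * e)) + c * (p / 2) * (y W - y (W \ K)) := by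
    rw [main]
    refine (norm_sum_le _ _).trans ((Finset.sum_le_sum bound).trans ?_)
    rw [Finset.sum_add_distrib, Finset.sum_const, ← Finset.mul_sum,
      Finset.sum_sub_distrib, Finset.card_powerset]
    have e1 : (∑ S ∈ K.powerset, if IsInd G S then (∏ v ∈ S, x v) * y (T S) else 0) = y W := by
      rw [hy, ZZ_split G x W K hK]
    have e2 : (∑ S ∈ K.powerset, if S = ∅ then y (W \ K) else 0) = y (W \ K) := by
      simp
    rw [e1, e2, nsmul_eq_mul]
    push_cast
    have h2 : (2 : ℝ) ^ K.card ≤ 2 ^ b := pow_le_pow_right₀ (by norm_num) hb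
    have h3 := mul_le_mul_of_nonneg_right h2 (mul_nonneg hc0 (mul_nonneg (ypos W).le he))
    linarith [h3, mul_left_comm c (y W) ((2:ℝ) ^ b * e)]
  rw [norm_mul, Complex.norm_real, Real.norm_of_nonneg (ypos W).le] at s1
  have s2 : p * y W ≤ y (W \ K) := by
    have := ZZ_real_upper G x hx M hM hxM b W K hK hb
    change y W ≤ (2 * M) ^ b * y (W \ K) at this
    have h4 := mul_le_mul_of_nonneg_left this hp.le
    have h5 := mul_le_mul_of_nonneg_right hpb (ypos (W \ K)).le
    linarith
  have s3 : y W * ‖rho G x lam W - R‖ ≤ y W * (p / 2 * ‖R‖) := by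
    refine s1.trans ?_
    have hRc : ‖R‖ = c * (1 - p / 2) := by rw [hc, div_mul_cancel₀ _ hk.ne']
    rw [hRc]
    have h6 : c * (p / 2) * (y W - y (W \ K)) ≤ c * (p / 2) * (y W - p * y W) :=
      mul_le_mul_of_nonneg_left (by linarith) (by positivity)
    have h7 : c * (y W * (2 ^ b * e)) ≤ c * (y W * (p ^ 2 / 4)) :=
      mul_le_mul_of_nonneg_left (mul_le_mul_of_nonneg_left hep (ypos W).le) hc0
    nlinarith
  exact le_of_mul_le_mul_left s3 (ypos W)

/-! ## Combinatorial part: layers of an exploration are bounded -/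

/-- A history of exploration: layers `L 0, …, L (r-1)`. -/
structure Hist {V : Type} (G : SimpleGraph V) (L : ℕ → Finset V) (r : ℕ) : Prop where
  ind : ∀ i < r, IsInd G (L i)
  par : ∀ i, i + 1 < r → ∀ v ∈ L (i + 1), ∃ w ∈ L i, G.Adj w v
  far : ∀ i j, i + 1 < j → j < r → ∀ u ∈ L i, ∀ v ∈ L j, ¬ G.Adj u v
  dis : ∀ i j, i < j → j < r → ∀ u ∈ L i, u ∉ L j
  one : 0 < r → (L 0).card ≤ 1

theorem Hist.adj_level {V : Type} {G : SimpleGraph V} {L : ℕ → Finset V} {r : ℕ}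
    (h : Hist G L r) {i j : ℕ} (hi : i < r) (hj : j < r) {u v : V} (hu : u ∈ L i) (hv : v ∈ L j)
    (huv : G.Adj u v) : i + 1 = j ∨ j + 1 = i := by
  by_contra hcon
  push Not at hcon
  rcases lt_trichotomy i j with hij | hij | hij
  · exact h.far i j (by omega) hj u hu v hv huv
  · subst hij
    exact h.ind i hi u hu v hv huv
  · exact h.far j i (by omega) hi v hv u hu huv.symm

theorem Hist.eq_level {V : Type} {G : SimpleGraph V} {L : ℕ → Finset V} {r : ℕ}
    (h : Hist G L r) {i j : ℕ} (hi : i < r) (hj : j < r) {u : V} (hu : u ∈ L i) (hv : u ∈ L j) :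
    i = j := by
  rcases lt_trichotomy i j with hij | hij | hij
  · exact absurd hv (h.dis i j hij hj u hu)
  · exact hij
  · exact absurd hu (h.dis j i hij hi u hv)

/-- Closed neighbourhood of a finite set. -/
noncomputable def nb {V : Type} [Fintype V] (G : SimpleGraph V) (X : Finset V) : Finset V :=
  X ∪ nbr G X Finset.univ

theorem nb_card {V : Type} [Fintype V] (G : SimpleGraph V) (D : ℕ)
    (hD : ∀ v : V, (G.neighborSet v).ncard ≤ D) (X : Finset V) :
    (nb G X).card ≤ (D + 1) * X.card := by
  have h1 : nbr G X Finset.univ ⊆ X.biUnion (fun v => (G.neighborSet v).toFinset) := by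
    intro v hv
    rw [mem_nbr] at hv
    obtain ⟨-, s, hs, hsv⟩ := hv
    rw [Finset.mem_biUnion]
    exact ⟨s, hs, by simpa using hsv⟩
  have h2 : (X.biUnion (fun v => (G.neighborSet v).toFinset)).card ≤ X.card * D := by
    refine Finset.card_biUnion_le_card_mul _ _ _ ?_
    intro v _
    rw [← Set.ncard_eq_toFinset_card']
    exact hD v
  have h3 := Finset.card_union_le X (nbr G X Finset.univ)
  have h4 := Finset.card_le_card h1
  unfold nb
  nlinarith

theorem nb_iter_card {V : Type} [Fintype V] (G : SimpleGraph V) (D : ℕ)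
    (hD : ∀ v : V, (G.neighborSet v).ncard ≤ D) (X : Finset V) (k : ℕ) :
    ((nb G)^[k] X).card ≤ (D + 1) ^ k * X.card := by
  induction k with
  | zero => simp
  | succ k ih =>
    rw [Function.iterate_succ_apply']
    refine (nb_card G D hD _).trans ?_
    rw [pow_succ', mul_assoc]
    exact Nat.mul_le_mul_left _ ih

theorem nb_iter_mono {V : Type} [Fintype V] (G : SimpleGraph V) (X : Finset V) {k l : ℕ}
    (h : k ≤ l) : (nb G)^[k] X ⊆ (nb G)^[l] X := by
  induction l, h using Nat.le_induction with
  | base => exact le_refl _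
  | succ l _ ih =>
    rw [Function.iterate_succ_apply']
    exact ih.trans Finset.subset_union_left

theorem nb_iter_step {V : Type} [Fintype V] (G : SimpleGraph V) (X : Finset V) {k : ℕ} {u v : V}
    (hu : u ∈ (nb G)^[k] X) (huv : G.Adj u v) : v ∈ (nb G)^[k + 1] X := by
  rw [Function.iterate_succ_apply']
  refine Finset.mem_union_right _ ?_
  rw [mem_nbr]
  exact ⟨Finset.mem_univ _, u, hu, huv⟩

/-- A geodesic descending through the layers. -/
structure Geo {V : Type} (G : SimpleGraph V) (L : ℕ → Finset V) (s : ℕ) (P : ℕ → V) : Prop where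
  mem : ∀ i ≤ s, P i ∈ L i
  adj : ∀ i < s, G.Adj (P i) (P (i + 1))

theorem exists_geo {V : Type} {G : SimpleGraph V} {L : ℕ → Finset V} {r : ℕ}
    (h : Hist G L r) (s : ℕ) (hs : s < r) (w : V) (hw : w ∈ L s) :
    ∃ P : ℕ → V, Geo G L s P ∧ P s = w := by
  induction s generalizing w with
  | zero =>
    refine ⟨fun _ => w, ⟨?_, ?_⟩, rfl⟩
    · intro i hi
      obtain rfl : i = 0 := by omega
      exact hw
    · intro i hi
      omega
  | succ s ih =>
    obtain ⟨w', hw', hadj⟩ := h.par s hs w hw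
    obtain ⟨P, hP, hPs⟩ := ih (by omega) w' hw'
    refine ⟨fun i => if i ≤ s then P i else w, ⟨?_, ?_⟩, by simp⟩
    · intro i hi
      by_cases his : i ≤ s
      · simpa [his] using hP.mem i his
      · obtain rfl : i = s + 1 := by omega
        simpa using hw
    · intro i hi
      by_cases his : i < s
      · have h1 : i ≤ s := by omega
        have h2 : i + 1 ≤ s := by omega
        simpa [h1, h2] using hP.adj i his
      · obtain rfl : i = s := by omega
        simpa [hPs] using hadj

/-- A branching far from both ends yields a subdivided claw. -/
theorem claw_of_branch {V : Type} {G : SimpleGraph V} {L : ℕ → Finset V} {r s t m : ℕ}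
    (h : Hist G L r) (hs : s < r) (P Q : ℕ → V) (hP : Geo G L s P) (hQ : Geo G L s Q)
    (htm : t ≤ m) (hms : m + t ≤ s) (hm : m < s) (hPQ : G.Adj (P m) (Q (m + 1)))
    (hne : ∀ i, m < i → i ≤ s → P i ≠ Q i)
    (hn1 : ∀ i, m < i → i < s → ¬ G.Adj (P i) (Q (i + 1)))
    (hn2 : ∀ i, m < i → i < s → ¬ G.Adj (Q i) (P (i + 1))) :
    Nonempty (subdividedClaw t ↪g G) := by
  -- adjacency along P
  have padj : ∀ i j, i ≤ s → j ≤ s → (G.Adj (P i) (P j) ↔ (i + 1 = j ∨ j + 1 = i)) := by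
    intro i j hi hj
    constructor
    · exact h.adj_level (by omega) (by omega) (hP.mem i hi) (hP.mem j hj)
    · rintro (rfl | rfl)
      · exact hP.adj i (by omega)
      · exact (hP.adj j (by omega)).symm
  have qadj : ∀ i j, i ≤ s → j ≤ s → (G.Adj (Q i) (Q j) ↔ (i + 1 = j ∨ j + 1 = i)) := by
    intro i j hi hj
    constructor
    · exact h.adj_level (by omega) (by omega) (hQ.mem i hi) (hQ.mem j hj)
    · rintro (rfl | rfl)
      · exact hQ.adj i (by omega)
      · exact (hQ.adj j (by omega)).symm
  have pqadj : ∀ i j, i ≤ s → m < j → j ≤ s → (G.Adj (P i) (Q j) ↔ (i = m ∧ j = m + 1)) := by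
    intro i j hi hj hj'
    constructor
    · intro hadj
      have := h.adj_level (by omega) (by omega) (hP.mem i hi) (hQ.mem j hj') hadj
      rcases this with rfl | rfl
      · by_cases him : m < i
        · exact absurd hadj (hn1 i him (by omega))
        · omega
      · exact absurd hadj.symm (hn2 j hj (by omega))
    · rintro ⟨rfl, rfl⟩
      exact hPQ
  have pinj : ∀ i j, i ≤ s → j ≤ s → P i = P j → i = j := by
    intro i j hi hj e
    exact h.eq_level (by omega) (by omega) (hP.mem i hi) (e ▸ hP.mem j hj)
  have qinj : ∀ i j, i ≤ s → j ≤ s → Q i = Q j → i = j := by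
    intro i j hi hj e
    exact h.eq_level (by omega) (by omega) (hQ.mem i hi) (e ▸ hQ.mem j hj)
  have pqne : ∀ i j, i ≤ s → m < j → j ≤ s → P i ≠ Q j := by
    intro i j hi hj hj' e
    have : i = j := h.eq_level (by omega) (by omega) (hP.mem i hi) (e ▸ hQ.mem j hj')
    subst this
    exact hne i hj hi e
  let f : Option (Fin 3 × Fin t) → V := fun a =>
    match a with
    | none => P m
    | some (0, j) => P (m + 1 + j)
    | some (1, j) => Q (m + 1 + j)
    | some (2, j) => P (m - 1 - j)
  refine ⟨⟨⟨f, ?_⟩, ?_⟩⟩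
  · rintro (_ | ⟨i, j⟩) (_ | ⟨i', j'⟩) e
    · rfl
    · exfalso
      have := j'.2
      fin_cases i'
      · have := pinj _ _ (by omega) (by omega) e; omega
      · exact pqne _ _ (by omega) (by omega) (by omega) e
      · have := pinj _ _ (by omega) (by omega) e; omega
    · exfalso
      have := j.2
      fin_cases i
      · have := pinj _ _ (by omega) (by omega) e; omega
      · exact pqne _ _ (by omega) (by omega) (by omega) e.symm
      · have := pinj _ _ (by omega) (by omega) e; omega
    · have := j.2
      have := j'.2
      fin_cases i <;> fin_cases i'
      · have := pinj _ _ (by omega) (by omega) e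
        have : j = j' := by omega
        rw [this]
      · exact absurd e (pqne _ _ (by omega) (by omega) (by omega))
      · have := pinj _ _ (by omega) (by omega) e; omega
      · exact absurd e.symm (pqne _ _ (by omega) (by omega) (by omega))
      · have := qinj _ _ (by omega) (by omega) e
        have : j = j' := by omega
        rw [this]
      · exact absurd e.symm (pqne _ _ (by omega) (by omega) (by omega))
      · have := pinj _ _ (by omega) (by omega) e; omega
      · exact absurd e (pqne _ _ (by omega) (by omega) (by omega))
      · have := pinj _ _ (by omega) (by omega) e
        have : j = j' := by omega
        rw [this]
  · intro a b
    change G.Adj (f a) (f b) ↔ _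
    rcases a with _ | ⟨i, j⟩ <;> rcases b with _ | ⟨i', j'⟩
    · simp
    · have := j'.2
      fin_cases i'
      · change G.Adj (P m) (P (m + 1 + j')) ↔ _
        rw [padj _ _ (by omega) (by omega)]
        simp [subdividedClaw]; omega
      · change G.Adj (P m) (Q (m + 1 + j')) ↔ _
        rw [pqadj _ _ (by omega) (by omega) (by omega)]
        simp [subdividedClaw]
      · change G.Adj (P m) (P (m - 1 - j')) ↔ _
        rw [padj _ _ (by omega) (by omega)]
        simp [subdividedClaw]; omega
    · have := j.2
      fin_cases i
      · change G.Adj (P (m + 1 + j)) (P m) ↔ _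
        rw [padj _ _ (by omega) (by omega)]
        simp [subdividedClaw]; omega
      · change G.Adj (Q (m + 1 + j)) (P m) ↔ _
        rw [G.adj_comm, pqadj _ _ (by omega) (by omega) (by omega)]
        simp [subdividedClaw]
      · change G.Adj (P (m - 1 - j)) (P m) ↔ _
        rw [padj _ _ (by omega) (by omega)]
        simp [subdividedClaw]; omega
    · have := j.2
      have := j'.2
      fin_cases i <;> fin_cases i'
      · change G.Adj (P (m + 1 + j)) (P (m + 1 + j')) ↔ _
        rw [padj _ _ (by omega) (by omega)]
        simp [subdividedClaw]; omega
      · change G.Adj (P (m + 1 + j)) (Q (m + 1 + j')) ↔ _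
        rw [pqadj _ _ (by omega) (by omega) (by omega)]
        simp [subdividedClaw]; omega
      · change G.Adj (P (m + 1 + j)) (P (m - 1 - j')) ↔ _
        rw [padj _ _ (by omega) (by omega)]
        simp [subdividedClaw]; omega
      · change G.Adj (Q (m + 1 + j)) (P (m + 1 + j')) ↔ _
        rw [G.adj_comm, pqadj _ _ (by omega) (by omega) (by omega)]
        simp [subdividedClaw]; omega
      · change G.Adj (Q (m + 1 + j)) (Q (m + 1 + j')) ↔ _
        rw [qadj _ _ (by omega) (by omega)]
        simp [subdividedClaw]; omega
      · change G.Adj (Q (m + 1 + j)) (P (m - 1 - j')) ↔ _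
        rw [G.adj_comm, pqadj _ _ (by omega) (by omega) (by omega)]
        simp [subdividedClaw]; omega
      · change G.Adj (P (m - 1 - j)) (P (m + 1 + j')) ↔ _
        rw [padj _ _ (by omega) (by omega)]
        simp [subdividedClaw]; omega
      · change G.Adj (P (m - 1 - j)) (Q (m + 1 + j')) ↔ _
        rw [pqadj _ _ (by omega) (by omega) (by omega)]
        simp [subdividedClaw]; omega
      · change G.Adj (P (m - 1 - j)) (P (m - 1 - j')) ↔ _
        rw [padj _ _ (by omega) (by omega)]
        simp [subdividedClaw]; omega

theorem geo_up {V : Type} [Fintype V] {G : SimpleGraph V} {L : ℕ → Finset V} {s : ℕ} {P : ℕ → V}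
    (hP : Geo G L s P) (X : Finset V) (k i d : ℕ) (hi : i + d ≤ s) (h : P i ∈ (nb G)^[k] X) :
    P (i + d) ∈ (nb G)^[k + d] X := by
  induction d with
  | zero => exact h
  | succ d ih => exact nb_iter_step G X (ih (by omega)) (hP.adj (i + d) (by omega))

theorem geo_down {V : Type} [Fintype V] {G : SimpleGraph V} {L : ℕ → Finset V} {s : ℕ} {P : ℕ → V}
    (hP : Geo G L s P) (X : Finset V) (k i d : ℕ) (hi : i + d ≤ s)
    (h : P (i + d) ∈ (nb G)^[k] X) : P i ∈ (nb G)^[k + d] X := by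
  induction d generalizing k with
  | zero => exact h
  | succ d ih =>
    have := nb_iter_step G X h (hP.adj (i + d) (by omega)).symm
    have := ih (k + 1) (by omega) this
    rwa [show k + (d + 1) = k + 1 + d by omega]

/-- Two geodesics meeting at level `t` end close to each other. -/
theorem geo_close {V : Type} [Fintype V] {G : SimpleGraph V} {L : ℕ → Finset V} {r s t : ℕ}
    (h : Hist G L r) (hs : s < r) (hfree : IsEmpty (subdividedClaw t ↪g G)) (ht : 1 ≤ t)
    (P Q : ℕ → V) (hP : Geo G L s P) (hQ : Geo G L s Q)
    (hts : t ≤ s) (hPQ : P t = Q t) : Q s ∈ (nb G)^[2 * t] {P s} := by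
  let touch : ℕ → Prop := fun m => P m = Q m ∨
    (m < s ∧ (G.Adj (P m) (Q (m + 1)) ∨ G.Adj (Q m) (P (m + 1))))
  obtain ⟨m, hm, hms, htm, hmax⟩ : ∃ m, touch m ∧ m ≤ s ∧ t ≤ m ∧
      ∀ i, m < i → i ≤ s → ¬ touch i := by
    refine ⟨Nat.findGreatest touch s, ?_, Nat.findGreatest_le s, ?_, ?_⟩
    · exact Nat.findGreatest_spec hts (Or.inl hPQ)
    · exact Nat.le_findGreatest hts (Or.inl hPQ)
    · intro i hi hi'
      exact Nat.findGreatest_is_greatest hi hi'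
  have hne : ∀ i, m < i → i ≤ s → P i ≠ Q i := fun i hi hi' e => hmax i hi hi' (Or.inl e)
  have hn1 : ∀ i, m < i → i < s → ¬ G.Adj (P i) (Q (i + 1)) :=
    fun i hi hi' e => hmax i hi hi'.le (Or.inr ⟨hi', Or.inl e⟩)
  have hn2 : ∀ i, m < i → i < s → ¬ G.Adj (Q i) (P (i + 1)) :=
    fun i hi hi' e => hmax i hi hi'.le (Or.inr ⟨hi', Or.inr e⟩)
  have hstart : P s ∈ (nb G)^[0] {P s} := by simp
  rcases Nat.lt_or_ge m s with hlt | hge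
  · have hm' : G.Adj (P m) (Q (m + 1)) ∨ G.Adj (Q m) (P (m + 1)) := by
      rcases hm with e | ⟨-, e⟩
      · left
        rw [e]
        exact hQ.adj m hlt
      · exact e
    rcases Nat.lt_or_ge s (m + t) with hlt2 | hge2
    · rcases hm' with e | e
      · have h1 := geo_down hP {P s} 0 m (s - m) (by omega)
          (by rw [show m + (s - m) = s by omega]; exact hstart)
        have h2 := nb_iter_step G _ h1 e
        have h3 := geo_up hQ {P s} _ (m + 1) (s - (m + 1)) (by omega) h2
        rw [show m + 1 + (s - (m + 1)) = s by omega] at h3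
        exact nb_iter_mono G _ (by omega) h3
      · have h1 := geo_down hP {P s} 0 (m + 1) (s - (m + 1)) (by omega)
          (by rw [show m + 1 + (s - (m + 1)) = s by omega]; exact hstart)
        have h2 := nb_iter_step G _ h1 e.symm
        have h3 := geo_up hQ {P s} _ m (s - m) (by omega) h2
        rw [show m + (s - m) = s by omega] at h3
        exact nb_iter_mono G _ (by omega) h3
    · exfalso
      rcases hm' with e | e
      · obtain ⟨φ⟩ := claw_of_branch h hs P Q hP hQ htm hge2 hlt e hne hn1 hn2
        exact hfree.false φ
      · obtain ⟨φ⟩ := claw_of_branch h hs Q P hQ hP htm hge2 hlt e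
          (fun i hi hi' e => hne i hi hi' e.symm) hn2 hn1
        exact hfree.false φ
  · obtain rfl : m = s := by omega
    rcases hm with e | ⟨h', -⟩
    · rw [← e]
      exact nb_iter_mono G _ (Nat.zero_le _) hstart
    · omega

theorem layer_growth {V : Type} [Fintype V] {G : SimpleGraph V} {L : ℕ → Finset V} {r : ℕ}
    (D : ℕ) (hD : ∀ v : V, (G.neighborSet v).ncard ≤ D)
    (h : Hist G L r) (s : ℕ) (hs : s < r) : (L s).card ≤ (D + 1) ^ s := by
  induction s with
  | zero => simpa using h.one hs
  | succ s ih =>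
    have h1 : L (s + 1) ⊆ nb G (L s) := by
      intro v hv
      obtain ⟨w, hw, hwv⟩ := h.par s hs v hv
      refine Finset.mem_union_right _ ?_
      rw [mem_nbr]
      exact ⟨Finset.mem_univ _, w, hw, hwv⟩
    refine (Finset.card_le_card h1).trans ((nb_card G D hD _).trans ?_)
    rw [pow_succ']
    exact Nat.mul_le_mul_left _ (ih (by omega))

theorem layer_bound {V : Type} [Fintype V] {G : SimpleGraph V} {L : ℕ → Finset V} {r t : ℕ}
    (D : ℕ) (hD : ∀ v : V, (G.neighborSet v).ncard ≤ D) (ht : 1 ≤ t)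
    (hfree : IsEmpty (subdividedClaw t ↪g G))
    (h : Hist G L r) (s : ℕ) (hs : s < r) : (L s).card ≤ (D + 1) ^ (3 * t) := by
  rcases Nat.lt_or_ge s t with hlt | hge
  · exact (layer_growth D hD h s hs).trans (Nat.pow_le_pow_right (by omega) (by omega))
  · have hex : ∀ w : V, ∃ P : ℕ → V, w ∈ L s → Geo G L s P ∧ P s = w := by
      intro w
      by_cases hw : w ∈ L s
      · obtain ⟨P, hP⟩ := exists_geo h s hs w hw
        exact ⟨P, fun _ => hP⟩
      · exact ⟨fun _ => w, fun h' => absurd h' hw⟩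
    choose P hP using hex
    have hmap : ∀ w ∈ L s, P w t ∈ L t := fun w hw => (hP w hw).1.mem t hge
    have hfib : ∀ a ∈ L t, ((L s).filter (fun w => P w t = a)).card ≤ (D + 1) ^ (2 * t) := by
      intro a _
      rcases Finset.eq_empty_or_nonempty ((L s).filter (fun w => P w t = a)) with he | ⟨w, hw⟩
      · rw [he]; simp
      · rw [Finset.mem_filter] at hw
        have hsub : (L s).filter (fun w => P w t = a) ⊆ (nb G)^[2 * t] {w} := by
          intro w' hw'
          rw [Finset.mem_filter] at hw'
          have := geo_close h hs hfree ht (P w) (P w') (hP w hw.1).1 (hP w' hw'.1).1 hge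
            (hw.2.trans hw'.2.symm)
          rwa [(hP w hw.1).2, (hP w' hw'.1).2] at this
        refine (Finset.card_le_card hsub).trans ((nb_iter_card G D hD _ _).trans ?_)
        simp
    have h1 := Finset.card_le_mul_card_image_of_maps_to hmap _ hfib
    have h2 := layer_growth D hD h t (by omega)
    refine h1.trans ((Nat.mul_le_mul_left _ h2).trans ?_)
    rw [← pow_add]
    exact Nat.pow_le_pow_right (by omega) (by omega)

/-- Reachable exploration states. -/
def Good {V : Type} (G : SimpleGraph V) (W K : Finset V) : Prop :=
  ∃ (L : ℕ → Finset V) (r : ℕ), Hist G L r ∧ K ⊆ W ∧ (r = 0 → K.card ≤ 1) ∧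
    (∀ i, i + 1 = r → ∀ v ∈ K, ∃ w ∈ L i, G.Adj w v) ∧
    (∀ i < r, ∀ v ∈ W, v ∉ L i) ∧
    (∀ i, i + 1 < r → ∀ u ∈ L i, ∀ v ∈ W, ¬ G.Adj u v) ∧
    (∀ i < r, ∀ u ∈ L i, ∀ v ∈ W \ K, ¬ G.Adj u v)

theorem Good.card {V : Type} [Fintype V] {G : SimpleGraph V} {t : ℕ}
    (D : ℕ) (hD : ∀ v : V, (G.neighborSet v).ncard ≤ D) (ht : 1 ≤ t)
    (hfree : IsEmpty (subdividedClaw t ↪g G)) {W K : Finset V} (h : Good G W K) :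
    K.card ≤ (D + 1) ^ (3 * t + 1) := by
  obtain ⟨L, r, hL, hKW, h0, hpar, -⟩ := h
  rcases r with _ | s
  · exact (h0 rfl).trans (Nat.one_le_pow _ _ (by omega))
  · have h1 : K ⊆ nb G (L s) := by
      intro v hv
      obtain ⟨w, hw, hwv⟩ := hpar s rfl v hv
      refine Finset.mem_union_right _ ?_
      rw [mem_nbr]
      exact ⟨Finset.mem_univ _, w, hw, hwv⟩
    refine (Finset.card_le_card h1).trans ((nb_card G D hD _).trans ?_)
    rw [pow_succ']
    exact Nat.mul_le_mul_left _ (layer_bound D hD ht hfree hL s (by omega))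

theorem Good.step {V : Type} {G : SimpleGraph V} {W K : Finset V} (h : Good G W K)
    (S : Finset V) (hS : S ⊆ K) (hind : IsInd G S) :
    Good G (W \ K) (nbr G S (W \ K)) := by
  obtain ⟨L, r, hL, hKW, h0, hpar, hdis, hfar, hnon⟩ := h
  have hlt : ∀ i, i < r → (fun i => if i = r then S else L i) i = L i := by
    intro i hi
    simp [hi.ne]
  have hr : (fun i => if i = r then S else L i) r = S := by simp
  generalize (fun i => if i = r then S else L i) = L' at hlt hr
  refine ⟨L', r + 1, ⟨?_, ?_, ?_, ?_, ?_⟩, ?_, ?_, ?_, ?_, ?_, ?_⟩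
  · intro i hi
    rcases Nat.lt_succ_iff_lt_or_eq.1 hi with hi | rfl
    · rw [hlt i hi]; exact hL.ind i hi
    · rw [hr]; exact hind
  · intro i hi v hv
    rw [hlt i (by omega)]
    rcases Nat.lt_succ_iff_lt_or_eq.1 hi with hi | rfl
    · rw [hlt _ hi] at hv; exact hL.par i hi v hv
    · rw [hr] at hv; exact hpar i rfl v (hS hv)
  · intro i j hij hj u hu v hv
    rw [hlt i (by omega)] at hu
    rcases Nat.lt_succ_iff_lt_or_eq.1 hj with hj | rfl
    · rw [hlt _ hj] at hv; exact hL.far i j hij hj u hu v hv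
    · rw [hr] at hv; exact hfar i hij u hu v (hKW (hS hv))
  · intro i j hij hj u hu hv
    rw [hlt i (by omega)] at hu
    rcases Nat.lt_succ_iff_lt_or_eq.1 hj with hj | rfl
    · rw [hlt _ hj] at hv; exact hL.dis i j hij hj u hu hv
    · rw [hr] at hv; exact hdis i hij u (hKW (hS hv)) hu
  · intro _
    rcases Nat.eq_zero_or_pos r with rfl | hpos
    · rw [hr]; exact (Finset.card_le_card hS).trans (h0 rfl)
    · rw [hlt 0 hpos]; exact hL.one hpos
  · exact Finset.filter_subset _ _
  · intro h'; omega
  · intro i hi v hv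
    obtain rfl : i = r := by omega
    rw [hr]
    exact ((mem_nbr _ _ _ _).1 hv).2
  · intro i hi v hv
    rw [Finset.mem_sdiff] at hv
    rcases Nat.lt_succ_iff_lt_or_eq.1 hi with hi | rfl
    · rw [hlt i hi]; exact hdis i hi v hv.1
    · rw [hr]; exact fun h' => hv.2 (hS h')
  · intro i hi u hu v hv
    rw [hlt i (by omega)] at hu
    exact hnon i (by omega) u hu v hv
  · intro i hi u hu v hv
    rw [Finset.mem_sdiff] at hv
    rcases Nat.lt_succ_iff_lt_or_eq.1 hi with hi | rfl
    · rw [hlt i hi] at hu; exact hnon i hi u hu v hv.1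
    · rw [hr] at hu
      intro hadj
      exact hv.2 ((mem_nbr _ _ _ _).2 ⟨hv.1, u, hu, hadj⟩)

theorem Good.start {V : Type} {G : SimpleGraph V} {W : Finset V} (u : V) (hu : u ∈ W) :
    Good G W {u} := by
  refine ⟨fun _ => ∅, 0, ⟨?_, ?_, ?_, ?_, ?_⟩, by simpa using hu, ?_, ?_, ?_, ?_, ?_⟩ <;> simp

theorem good_estimate {V : Type} [Fintype V] (G : SimpleGraph V) (t D : ℕ) (ht : 1 ≤ t)
    (hD : ∀ v : V, (G.neighborSet v).ncard ≤ D) (hfree : IsEmpty (subdividedClaw t ↪g G))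
    (x : V → ℝ) (lam : V → ℂ) (M : ℝ)
    (hM : 1 ≤ M) (hx : ∀ v, 0 ≤ x v) (hxM : ∀ v, x v ≤ M) (hl : ∀ v, ‖lam v‖ ≤ M)
    (b : ℕ) (hb : b = (D + 1) ^ (3 * t + 1)) (ε p : ℝ) (hε : 0 ≤ ε)
    (hd : ∀ v, ‖lam v - x v‖ ≤ ε)
    (hp : 0 < p) (hp1 : p ≤ 1) (hpb : p * (2 * M) ^ b ≤ 1)
    (hep : 2 ^ b * (b * M ^ b * ε) ≤ p ^ 2 / 4) (n : ℕ) :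
    ∀ W K : Finset V, W.card ≤ n → Good G W K →
      ‖rho G x lam W - rho G x lam (W \ K)‖ ≤ p / 2 * ‖rho G x lam (W \ K)‖ := by
  induction n with
  | zero =>
    intro W K hW _
    obtain rfl : W = ∅ := by simpa using hW
    simp
    positivity
  | succ n ih =>
    intro W K hW hg
    rcases Finset.eq_empty_or_nonempty K with rfl | hKne
    · simp
      positivity
    have hKW : K ⊆ W := by
      obtain ⟨L, r, -, hKW, -⟩ := hg
      exact hKW
    have hKb : K.card ≤ b := hb ▸ hg.card D hD ht hfree
    have hcard : (W \ K).card ≤ n := by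
      rw [Finset.card_sdiff_of_subset hKW]
      have := hKne.card_pos
      omega
    refine contraction G x lam M hM hx hxM b (b * M ^ b * ε) p (by positivity) hp hp1 hpb hep W K
      hKW hKb ?_ ?_
    · intro S hS
      refine (prod_diff x lam M ε hM hε hx hxM hl hd S).trans ?_
      have hSb : S.card ≤ b := (Finset.card_le_card hS).trans hKb
      have h1 : (S.card : ℝ) ≤ b := by exact_mod_cast hSb
      have h2 : M ^ S.card ≤ M ^ b := pow_le_pow_right₀ hM hSb
      gcongr
    · intro S hS _ hind
      exact ih _ _ hcard (hg.step S hS hind)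

theorem rho_ne_zero {V : Type} [Fintype V] (G : SimpleGraph V) (t D : ℕ) (ht : 1 ≤ t)
    (hD : ∀ v : V, (G.neighborSet v).ncard ≤ D) (hfree : IsEmpty (subdividedClaw t ↪g G))
    (x : V → ℝ) (lam : V → ℂ) (M : ℝ)
    (hM : 1 ≤ M) (hx : ∀ v, 0 ≤ x v) (hxM : ∀ v, x v ≤ M) (hl : ∀ v, ‖lam v‖ ≤ M)
    (b : ℕ) (hb : b = (D + 1) ^ (3 * t + 1)) (ε p : ℝ) (hε : 0 ≤ ε)
    (hd : ∀ v, ‖lam v - x v‖ ≤ ε)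
    (hp : 0 < p) (hp1 : p ≤ 1) (hpb : p * (2 * M) ^ b ≤ 1)
    (hep : 2 ^ b * (b * M ^ b * ε) ≤ p ^ 2 / 4) (W : Finset V) : rho G x lam W ≠ 0 := by
  induction W using Finset.induction_on with
  | empty => simp [rho, ZZ_empty]
  | insert a W ha ih =>
    have := good_estimate G t D ht hD hfree x lam M hM hx hxM hl b hb ε p hε hd hp hp1 hpb hep _
      (insert a W) {a} (le_refl _) (Good.start a (Finset.mem_insert_self _ _))
    have e : insert a W \ {a} = W := by
      ext v
      simp only [Finset.mem_sdiff, Finset.mem_insert, Finset.mem_singleton]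
      grind
    rw [e] at this
    intro h0
    rw [h0, zero_sub, norm_neg] at this
    have := norm_pos_iff.2 ih
    nlinarith

/-- for every `λ₀ > 0`, `t ≥ 1`, `Δ ≥ 3` there is an open set
`F ⊆ ℂ` containing `[0, λ₀]` such that the multivariate independence polynomial
of every finite `S_{t,t,t}`-free simple graph of maximum degree at most `Δ` is
nonzero whenever all vertex weights lie in `F`. -/
theorem stmt1 (lam₀ : ℝ) (hlam₀ : 0 < lam₀) (t Δ : ℕ) (ht : 1 ≤ t) (hΔ : 3 ≤ Δ) :
    ∃ F : Set ℂ, IsOpen F ∧ (∀ x : ℝ, 0 ≤ x → x ≤ lam₀ → (x : ℂ) ∈ F) ∧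
      ∀ (V : Type) [Fintype V] (G : SimpleGraph V),
        IsEmpty (subdividedClaw t ↪g G) →
        (∀ v : V, (G.neighborSet v).ncard ≤ Δ) →
        ∀ lam : V → ℂ, (∀ v, lam v ∈ F) → indepPoly G lam ≠ 0 := by
  set M : ℝ := lam₀ + 1 with hMdef
  have hM : 1 ≤ M := by linarith
  obtain ⟨b, hb⟩ : ∃ b : ℕ, b = (Δ + 1) ^ (3 * t + 1) := ⟨_, rfl⟩
  obtain ⟨p, hp, hp1, hpb⟩ : ∃ p : ℝ, 0 < p ∧ p ≤ 1 ∧ p * (2 * M) ^ b ≤ 1 := by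
    have h1 : (1 : ℝ) ≤ (2 * M) ^ b := one_le_pow₀ (by linarith)
    refine ⟨((2 * M) ^ b)⁻¹, by positivity, inv_le_one_of_one_le₀ h1, ?_⟩
    rw [inv_mul_cancel₀ (by positivity)]
  obtain ⟨ε, hε, hε1, hep⟩ : ∃ ε : ℝ, 0 < ε ∧ ε ≤ 1 ∧ 2 ^ b * (b * M ^ b * ε) ≤ p ^ 2 / 4 := by
    set C : ℝ := 2 ^ b * (b * M ^ b) with hC
    have hC0 : 0 ≤ C := by positivity
    refine ⟨min 1 (p ^ 2 / 4 / (C + 1)), by positivity, min_le_left _ _, ?_⟩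
    have h1 : min 1 (p ^ 2 / 4 / (C + 1)) ≤ p ^ 2 / 4 / (C + 1) := min_le_right _ _
    have h2 : p ^ 2 / 4 / (C + 1) * (C + 1) = p ^ 2 / 4 := by field_simp
    have h3 : 0 ≤ p ^ 2 / 4 / (C + 1) := by positivity
    have h4 := mul_le_mul_of_nonneg_left h1 hC0
    calc _ = C * min 1 (p ^ 2 / 4 / (C + 1)) := by rw [hC]; ring
      _ ≤ _ := by nlinarith
  refine ⟨{z : ℂ | ∃ x : ℝ, 0 ≤ x ∧ x ≤ lam₀ ∧ ‖z - x‖ < ε}, ?_, ?_, ?_⟩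
  · have : {z : ℂ | ∃ x : ℝ, 0 ≤ x ∧ x ≤ lam₀ ∧ ‖z - x‖ < ε}
        = ⋃ x ∈ Set.Icc (0 : ℝ) lam₀, Metric.ball (x : ℂ) ε := by
      ext z
      simp [dist_eq_norm, and_assoc]
    rw [this]
    exact isOpen_biUnion fun _ _ => Metric.isOpen_ball
  · intro x hx hx'
    exact ⟨x, hx, hx', by simpa using hε⟩
  · intro V _ G hfree hD lam hlam
    choose x hx0 hx1 hxd using hlam
    have hl : ∀ v, ‖lam v‖ ≤ M := by
      intro v
      have h1 : ‖lam v‖ ≤ ‖lam v - x v‖ + ‖(x v : ℂ)‖ := by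
        have := norm_add_le (lam v - x v) (x v : ℂ)
        simpa using this
      rw [Complex.norm_real, Real.norm_of_nonneg (hx0 v)] at h1
      have := hxd v
      have := hx1 v
      linarith
    have key := rho_ne_zero G t Δ ht hD hfree x lam M hM hx0
      (fun v => (hx1 v).trans (by linarith)) hl b hb ε p hε.le (fun v => (hxd v).le) hp hp1 hpb hep
      Finset.univ
    intro h0
    apply key
    have h1 : ZZ G lam Finset.univ = 0 := by
      rw [← h0]
      unfold ZZ indepPoly indepPolyOn
      refine Finset.sum_congr rfl fun S _ => ?_
      by_cases hS : IsInd G S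
      · rw [if_pos hS]; exact (if_pos hS).symm
      · rw [if_neg hS]; exact (if_neg hS).symm
    unfold rho
    rw [h1, zero_div]
end

section
/- Let k be a positive integer and let G = (V,E) be a finite claw-free simple graph whose largest clique has size at most k and each of whose connected components contains a simplicial clique. Then for every assignment of weights λ = (λ_v)_{v∈V} with λ_v ∈ R(k) for all v, the multivariate independence polynomial satisfies Z_{G,λ} ≠ 0. -/
attribute [local instance] Classical.propDecidable

/-- `K` is a simplicial clique in `G`: `K` is a clique and, for every `v ∈ K`,
the neighbours of `v` outside `K` induce a clique. -/
def IsSimplicialClique {V : Type*} (G : SimpleGraph V) (K : Set V) : Prop :=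
  G.IsClique K ∧ ∀ v ∈ K, G.IsClique {w : V | G.Adj v w ∧ w ∉ K}

/-- Every connected component of `G` contains a (nonempty) simplicial clique. -/
def EveryComponentHasSimplicialClique {V : Type*} (G : SimpleGraph V) : Prop :=
  ∀ c : G.ConnectedComponent, ∃ K : Set V, K.Nonempty ∧
    (∀ v ∈ K, G.connectedComponentMk v = c) ∧ IsSimplicialClique G K

lemma claw_free_aux {V : Type} (G : SimpleGraph V)
    (hclaw : IsEmpty (subdividedClaw 1 ↪g G)) (u a b c : V)
    (ha : G.Adj u a) (hb : G.Adj u b) (hc : G.Adj u c)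
    (hab : ¬ G.Adj a b) (hac : ¬ G.Adj a c) (hbc : ¬ G.Adj b c)
    (nab : a ≠ b) (nac : a ≠ c) (nbc : b ≠ c) : False := by
  apply hclaw.false
  have hba : ¬ G.Adj b a := fun h => hab h.symm
  have hca : ¬ G.Adj c a := fun h => hac h.symm
  have hcb : ¬ G.Adj c b := fun h => hbc h.symm
  refine ⟨⟨fun o => match o with
    | none => u
    | some (i, _) => ![a, b, c] i, ?_⟩, ?_⟩
  · rintro (_ | ⟨i, j⟩) (_ | ⟨i', j'⟩) h
    · rfl
    · exfalso
      fin_cases i'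
      · exact ha.ne h
      · exact hb.ne h
      · exact hc.ne h
    · exfalso
      fin_cases i
      · exact ha.ne h.symm
      · exact hb.ne h.symm
      · exact hc.ne h.symm
    · have hj : j = j' := Subsingleton.elim _ _
      subst hj
      fin_cases i <;> fin_cases i' <;> simp_all [eq_comm]
  · rintro (_ | ⟨i, j⟩) (_ | ⟨i', j'⟩)
    · simp
    · fin_cases i' <;> simp [subdividedClaw] <;> assumption
    · have ha' := ha.symm
      have hb' := hb.symm
      have hc' := hc.symm
      fin_cases i <;> simp [subdividedClaw] <;> assumption
    · fin_cases i <;> fin_cases i' <;> simp [subdividedClaw] <;>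
        first | assumption | exact G.irrefl

lemma indepPolyOn_insert {V : Type} [Fintype V] (G : SimpleGraph V) (lam : V → ℂ)
    (W : Finset V) (v : V) (hv : v ∉ W) :
    indepPolyOn G lam (insert v W) =
      indepPolyOn G lam W + lam v * indepPolyOn G lam (W.filter fun w => ¬ G.Adj v w) := by
  unfold indepPolyOn
  rw [Finset.sum_powerset_insert hv]
  congr 1
  rw [Finset.mul_sum]
  symm
  have hsub : (W.filter fun w => ¬ G.Adj v w).powerset ⊆ W.powerset :=
    Finset.powerset_mono.2 (Finset.filter_subset _ _)
  refine (Finset.sum_congr rfl ?_).trans (Finset.sum_subset hsub ?_)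
  · intro S hS
    have hS' := Finset.mem_powerset.1 hS
    have hvS : v ∉ S := fun h => hv (Finset.mem_filter.1 (hS' h)).1
    have hn : ∀ w ∈ S, ¬ G.Adj v w := fun w h => (Finset.mem_filter.1 (hS' h)).2
    have hiff : (∀ x ∈ insert v S, ∀ y ∈ insert v S, ¬ G.Adj x y) ↔
        (∀ x ∈ S, ∀ y ∈ S, ¬ G.Adj x y) := by
      constructor
      · intro h x hx y hy
        exact h x (Finset.mem_insert_of_mem hx) y (Finset.mem_insert_of_mem hy)
      · intro h x hx y hy
        rcases Finset.mem_insert.1 hx with rfl | hx' <;>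
          rcases Finset.mem_insert.1 hy with rfl | hy'
        · exact G.irrefl
        · exact hn y hy'
        · exact fun h => hn x hx' h.symm
        · exact h x hx' y hy'
    rw [Finset.prod_insert hvS]
    by_cases hc : (∀ x ∈ S, ∀ y ∈ S, ¬ G.Adj x y)
    · rw [if_pos hc, if_pos (hiff.2 hc)]
    · rw [if_neg hc, if_neg (fun h => hc (hiff.1 h)), mul_zero]
  · intro S hS hS'
    rw [if_neg]
    intro h
    apply hS'
    rw [Finset.mem_powerset] at hS ⊢
    intro w hw
    exact Finset.mem_filter.2 ⟨hS hw, h v (Finset.mem_insert_self _ _) w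
      (Finset.mem_insert_of_mem hw)⟩

lemma indepPolyOn_union_clique {V : Type} [Fintype V] (G : SimpleGraph V) (lam : V → ℂ)
    (W : Finset V) (K : Finset V) : Disjoint K W → G.IsClique (K : Set V) →
    indepPolyOn G lam (K ∪ W) = indepPolyOn G lam W +
      ∑ v ∈ K, lam v * indepPolyOn G lam (W.filter fun w => ¬ G.Adj v w) := by
  induction K using Finset.induction_on with
  | empty => simp
  | insert v K hvK ih =>
    intro hd hc
    rw [Finset.disjoint_insert_left] at hd
    have hc' : G.IsClique (K : Set V) := hc.subset (by simp)
    rw [Finset.insert_union, indepPolyOn_insert _ _ _ _ (by simp [hvK, hd.1]),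
      ih hd.2 hc', Finset.sum_insert hvK]
    have : (K ∪ W).filter (fun w => ¬ G.Adj v w) = W.filter fun w => ¬ G.Adj v w := by
      ext w
      simp only [Finset.mem_filter, Finset.mem_union]
      constructor
      · rintro ⟨h | h, h'⟩
        · exact absurd (hc (x := v) (y := w) (by simp) (by simp [h])
            (fun e => hvK (e ▸ h))) h'
        · exact ⟨h, h'⟩
      · rintro ⟨h, h'⟩
        exact ⟨Or.inr h, h'⟩
    rw [this]
    ring

lemma parab_aux (k : ℕ) (hk : 1 ≤ k) (l r : ℂ) (hl : l ∈ parabR k) (hr : 1 / 2 < r.re) :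
    -(1 / (2 * (k : ℝ))) < (l * r⁻¹).re := by
  have hk0 : (0 : ℝ) < k := by exact_mod_cast hk
  have hl' : l.im ^ 2 < l.re / k + 1 / (4 * (k : ℝ) ^ 2) := hl
  have hr0 : r ≠ 0 := by
    rintro rfl
    norm_num at hr
  have h1 : ‖r⁻¹ - 1‖ ≤ 1 := by
    have : r⁻¹ - 1 = (1 - r) / r := by field_simp
    rw [this, norm_div, div_le_one (norm_pos_iff.2 hr0)]
    rw [← sq_le_sq₀ (norm_nonneg _) (norm_nonneg _), Complex.sq_norm, Complex.sq_norm,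
      Complex.normSq_apply, Complex.normSq_apply]
    simp
    nlinarith
  have h2 : ‖l‖ < l.re + 1 / (2 * (k : ℝ)) := by
    set t : ℝ := 1 / (2 * (k : ℝ)) with ht
    have e1 : l.re / k + 1 / (4 * (k : ℝ) ^ 2) = 2 * t * l.re + t ^ 2 := by
      rw [ht]; field_simp; ring
    have ht0 : 0 < t := by positivity
    rw [e1] at hl'
    have hpos : 0 < l.re + t := by nlinarith [sq_nonneg l.im]
    rw [← sq_lt_sq₀ (norm_nonneg _) hpos.le, Complex.sq_norm, Complex.normSq_apply]
    nlinarith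
  have h3 : (l * r⁻¹).re = l.re + (l * (r⁻¹ - 1)).re := by
    rw [← Complex.add_re]; congr 1; ring
  have h4 : |(l * (r⁻¹ - 1)).re| ≤ ‖l‖ := by
    refine (Complex.abs_re_le_norm _).trans ?_
    rw [norm_mul]
    exact mul_le_of_le_one_right (norm_nonneg _) h1
  have := (abs_le.1 h4).1
  linarith

/-- `K` is a simplicial clique of the subgraph induced on `W`. -/
def SimpIn {V : Type} (G : SimpleGraph V) (W K : Finset V) : Prop :=
  K ⊆ W ∧ G.IsClique (K : Set V) ∧
    ∀ v ∈ K, ∀ x ∈ W \ K, ∀ y ∈ W \ K, G.Adj v x → G.Adj v y → x ≠ y → G.Adj x y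

/-- Every nonempty union of components of the subgraph on `W` has a simplicial clique. -/
def GoodOn {V : Type} (G : SimpleGraph V) (W : Finset V) : Prop :=
  ∀ A ⊆ W, A.Nonempty → (∀ a ∈ A, ∀ b ∈ W, G.Adj a b → b ∈ A) →
    ∃ K ⊆ A, K.Nonempty ∧ SimpIn G W K

lemma simpIn_step {V : Type} (G : SimpleGraph V)
    (hclaw : IsEmpty (subdividedClaw 1 ↪g G)) (W K : Finset V) (hK : SimpIn G W K)
    (v : V) (hv : v ∈ K) : SimpIn G (W \ K) ((W \ K).filter fun w => G.Adj v w) := by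
  refine ⟨Finset.filter_subset _ _, ?_, ?_⟩
  · intro x hx y hy hxy
    have hx' := Finset.mem_filter.1 (Finset.mem_coe.1 hx)
    have hy' := Finset.mem_filter.1 (Finset.mem_coe.1 hy)
    exact hK.2.2 v hv x hx'.1 y hy'.1 hx'.2 hy'.2 hxy
  · intro u hu x hx y hy hux huy hxy
    have hu' := Finset.mem_filter.1 hu
    rw [Finset.mem_sdiff, Finset.mem_filter, not_and] at hx hy
    by_contra hn
    have nvx : v ≠ x := by
      rintro rfl
      exact (Finset.mem_sdiff.1 hx.1).2 hv
    have nvy : v ≠ y := by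
      rintro rfl
      exact (Finset.mem_sdiff.1 hy.1).2 hv
    exact claw_free_aux G hclaw u v x y hu'.2.symm hux huy (hx.2 hx.1) (hy.2 hy.1) hn
      nvx nvy hxy

lemma goodOn_step {V : Type} (G : SimpleGraph V)
    (hclaw : IsEmpty (subdividedClaw 1 ↪g G)) (W K : Finset V) (hW : GoodOn G W)
    (hK : SimpIn G W K) : GoodOn G (W \ K) := by
  intro A hA hne hcl
  by_cases h : ∃ a ∈ A, ∃ v ∈ K, G.Adj v a
  · obtain ⟨a, ha, v, hv, hva⟩ := h
    have hs := simpIn_step G hclaw W K hK v hv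
    have hamem : a ∈ (W \ K).filter fun w => G.Adj v w := Finset.mem_filter.2 ⟨hA ha, hva⟩
    refine ⟨_, ?_, ⟨a, hamem⟩, hs⟩
    intro x hx
    by_cases hax : a = x
    · exact hax ▸ ha
    · exact hcl a ha x (Finset.mem_filter.1 hx).1
        (hs.2.1 (Finset.mem_coe.2 hamem) (Finset.mem_coe.2 hx) hax)
  · push Not at h
    obtain ⟨K', hK'A, hK'ne, hK'⟩ := hW A (hA.trans Finset.sdiff_subset) hne (by
      intro a ha b hb hab
      by_cases hbK : b ∈ K
      · exact absurd hab.symm (h a ha b hbK)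
      · exact hcl a ha b (Finset.mem_sdiff.2 ⟨hb, hbK⟩) hab)
    refine ⟨K', hK'A, hK'ne, hK'A.trans hA, hK'.2.1, ?_⟩
    intro v hv x hx y hy
    have hs : (W \ K) \ K' ⊆ W \ K' := Finset.sdiff_subset_sdiff Finset.sdiff_subset le_rfl
    exact hK'.2.2 v hv x (hs hx) y (hs hy)

lemma main_ind {V : Type} [Fintype V] (k : ℕ) (hk : 1 ≤ k) (G : SimpleGraph V)
    (hclaw : IsEmpty (subdividedClaw 1 ↪g G))
    (hclique : ∀ s : Finset V, G.IsClique (s : Set V) → s.card ≤ k)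
    (lam : V → ℂ) (hlam : ∀ v, lam v ∈ parabR k) (W : Finset V) : GoodOn G W →
    indepPolyOn G lam W ≠ 0 ∧ ∀ K, SimpIn G W K →
      1 / 2 < (indepPolyOn G lam W / indepPolyOn G lam (W \ K)).re := by
  induction W using Finset.strongInduction with
  | H W ih =>
    intro hW
    have hk0 : (0 : ℝ) < k := by exact_mod_cast hk
    have key : ∀ K, K.Nonempty → SimpIn G W K →
        1 / 2 < (indepPolyOn G lam W / indepPolyOn G lam (W \ K)).re := by
      intro K hne hK
      obtain ⟨hz, hr⟩ := ih (W \ K) (Finset.sdiff_ssubset hK.1 hne)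
        (goodOn_step G hclaw W K hW hK)
      have hrec := indepPolyOn_union_clique G lam (W \ K) K Finset.disjoint_sdiff hK.2.1
      rw [Finset.union_sdiff_of_subset hK.1] at hrec
      have hterm : ∀ v ∈ K, -(1 / (2 * (k : ℝ))) <
          (lam v * indepPolyOn G lam ((W \ K).filter fun w => ¬ G.Adj v w)
            / indepPolyOn G lam (W \ K)).re := by
        intro v hv
        have h1 := hr _ (simpIn_step G hclaw W K hK v hv)
        have h2 := parab_aux k hk (lam v) _ (hlam v) h1
        rw [← Finset.filter_not, inv_div, ← mul_div_assoc] at h2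
        exact h2
      rw [hrec, add_div, div_self hz, Finset.sum_div, Complex.add_re, Complex.re_sum,
        Complex.one_re]
      have hsum := Finset.sum_lt_sum_of_nonempty hne hterm
      rw [Finset.sum_const, nsmul_eq_mul] at hsum
      have hcard : (K.card : ℝ) ≤ k := by exact_mod_cast hclique K hK.2.1
      have hb : (K.card : ℝ) * (1 / (2 * (k : ℝ))) ≤ 1 / 2 := by
        calc (K.card : ℝ) * (1 / (2 * (k : ℝ))) ≤ k * (1 / (2 * (k : ℝ))) := by gcongr
          _ = 1 / 2 := by field_simp
      linarith
    have hne0 : indepPolyOn G lam W ≠ 0 := by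
      rcases W.eq_empty_or_nonempty with rfl | hWne
      · simp [indepPolyOn]
      · obtain ⟨K, -, hKne, hK⟩ := hW W le_rfl hWne (fun _ _ b hb _ => hb)
        intro h0
        have := key K hKne hK
        rw [h0] at this
        norm_num at this
    refine ⟨hne0, fun K hK => ?_⟩
    rcases K.eq_empty_or_nonempty with rfl | hKne
    · rw [Finset.sdiff_empty, div_self hne0]
      norm_num
    · exact key K hKne hK

/-- if `G` is a finite claw-free graph whose largest clique has
size at most `k` and each of whose connected components contains a simplicial
clique, then the multivariate independence polynomial is nonzero whenever all
vertex weights lie in the parabolic region `R(k)`. -/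
theorem stmt2 {V : Type} [Fintype V] (k : ℕ) (hk : 1 ≤ k) (G : SimpleGraph V)
    (hclaw : IsEmpty (subdividedClaw 1 ↪g G))
    (hclique : ∀ s : Finset V, G.IsClique (s : Set V) → s.card ≤ k)
    (hsimp : EveryComponentHasSimplicialClique G)
    (lam : V → ℂ) (hlam : ∀ v, lam v ∈ parabR k) :
    indepPoly G lam ≠ 0 := by
  refine (main_ind k hk G hclaw hclique lam hlam Finset.univ ?_).1
  intro A _ hne hcl
  obtain ⟨a, ha⟩ := hne
  obtain ⟨K, hKne, hKc, hK⟩ := hsimp (G.connectedComponentMk a)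
  have hwalk : ∀ x y : V, G.Walk x y → x ∈ A → y ∈ A := by
    intro x y p
    induction p with
    | nil => exact id
    | cons h _ ih => exact fun hx => ih (hcl _ hx _ (Finset.mem_univ _) h)
  refine ⟨K.toFinset, ?_, ?_, Finset.subset_univ _, ?_, ?_⟩
  · intro v hv
    obtain ⟨p⟩ := SimpleGraph.ConnectedComponent.exact (hKc v (Set.mem_toFinset.1 hv))
    exact hwalk a v p.reverse ha
  · exact Set.toFinset_nonempty.2 hKne
  · rw [Set.coe_toFinset]
    exact hK.1
  · intro v hv x hx y hy hvx hvy hxy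
    refine hK.2 v (Set.mem_toFinset.1 hv) ⟨hvx, ?_⟩ ⟨hvy, ?_⟩ hxy
    · simpa using hx
    · simpa using hy
end

section
/- Let G = (V,E) be a finite simple graph and suppose there exist vertex subsets V₁, …, V_ℓ ⊆ V such that each induced subgraph G[V_i] is a clique, every edge of G is contained in some V_i, every vertex of G is contained in at most two of the sets V_i, and |V_i| ≤ k₀ for all i. Then for every assignment of weights λ = (λ_v)_{v∈V} with λ_v ∈ R(k₀²/4) for all v, the multivariate independence polynomial satisfies Z_{G,λ} ≠ 0. -/
attribute [local instance] Classical.propDecidable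

lemma asano_aux (A B C D l : ℂ) (c : ℝ) (hc : 0 < c)
    (h : ∀ z w : ℂ, -c < z.re → -c < w.re → A + B * z + C * w + D * (z * w) ≠ 0)
    (hl : l.im ^ 2 < 4 * c ^ 2 * (c ^ 2 + l.re)) : A + l * D ≠ 0 := by
  by_cases hD : D = 0
  · have := h 0 0 (by simpa using hc) (by simpa using hc)
    simpa [hD] using this
  intro h0
  have hA : A = - (l * D) := eq_neg_of_add_eq_zero_left h0
  obtain ⟨s, hs⟩ := IsAlgClosed.exists_pow_nat_eq (((B + C) / D) ^ 2 + 4 * l) (n := 2) (by norm_num)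
  set m := (B + C) / D with hm
  have hBC : B + C = m * D := by rw [hm]; field_simp
  have key : ∀ r : ℂ, r ^ 2 + m * r - l = 0 → r.re ≤ -c := by
    intro r hr
    by_contra hlt
    push Not at hlt
    apply h r r hlt hlt
    have : A + B * r + C * r + D * (r * r) = D * (r ^ 2 + m * r - l) := by
      rw [hA]; linear_combination r * hBC
    rw [this, hr, mul_zero]
  have h1 := key ((-m + s) / 2) (by linear_combination hs / 4)
  have h2 := key ((-m - s) / 2) (by linear_combination hs / 4)
  have hp : ((-m + s) / 2) * ((-m - s) / 2) = - l := by linear_combination -hs / 4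
  generalize (-m + s) / 2 = r at *
  generalize (-m - s) / 2 = q at *
  have hre := congrArg Complex.re hp
  have him := congrArg Complex.im hp
  simp only [Complex.mul_re, Complex.mul_im, Complex.neg_re, Complex.neg_im] at hre him
  have e1 : l.re = -(r.re * q.re - r.im * q.im) := by linarith
  have e2 : l.im = -(r.re * q.im + r.im * q.re) := by linarith
  rw [e1, e2] at hl
  have hpq : c ^ 2 ≤ r.re * q.re := by nlinarith
  have hc2 : 0 < c ^ 2 := by positivity
  rcases le_total 0 (r.im * q.im) with hq | hq
  · nlinarith [sq_nonneg (r.re * q.im - r.im * q.re), mul_nonneg (sub_nonneg.2 hpq) hq,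
      mul_nonneg hc2.le (sub_nonneg.2 hpq)]
  · nlinarith [sq_nonneg (r.re * q.im + r.im * q.re), mul_nonneg hc2.le (neg_nonneg.2 hq),
      mul_nonneg hc2.le (sub_nonneg.2 hpq)]

/-- Weight of a set of vertices with clique variables `t`. -/
noncomputable def mwt {V J : Type} [Fintype J] (G : SimpleGraph V) (a b : V → J)
    (lam : V → ℂ) (t : J → ℂ) (S : Finset V) : ℂ :=
  if (∀ u ∈ S, ∀ v ∈ S, ¬ G.Adj u v) then
    (∏ v ∈ S, lam v) * ∏ j, (if ∃ v ∈ S, a v = j ∨ b v = j then 1 else t j) else 0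

lemma prod_split {J : Type} [Fintype J] (f : J → ℂ) (x y : J) (h : x ≠ y) :
    ∏ j, f j = f x * (f y * ∏ j ∈ (Finset.univ.erase x).erase y, f j) := by
  rw [Finset.mul_prod_erase _ _ (by simp [h.symm]), Finset.mul_prod_erase _ _ (by simp)]

lemma mwt_expand {V J : Type} [Fintype J] (G : SimpleGraph V) (a b : V → J)
    (hab : ∀ v, a v ≠ b v)
    (hG : ∀ u v, G.Adj u v ↔ u ≠ v ∧ ∃ j, (a u = j ∨ b u = j) ∧ (a v = j ∨ b v = j))
    (lam : V → ℂ) (t : J → ℂ) (S : Finset V) (v : V) (hv : v ∉ S) :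
    ∃ B C D : ℂ, mwt G a b lam t (insert v S) = lam v * D ∧
      ∀ z w : ℂ, mwt G a b lam
        (fun j => t j + (if j = a v then z else 0) + (if j = b v then w else 0)) S
        = mwt G a b lam t S + B * z + C * w + D * (z * w) := by
  by_cases hS : ∀ u ∈ S, ∀ v ∈ S, ¬ G.Adj u v
  swap
  · refine ⟨0, 0, 0, ?_, ?_⟩
    · have : ¬ ∀ u ∈ insert v S, ∀ w ∈ insert v S, ¬ G.Adj u w := fun h =>
        hS fun u hu w hw => h u (Finset.mem_insert_of_mem hu) w (Finset.mem_insert_of_mem hw)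
      simp only [mwt, if_neg this, mul_zero]
    · intro z w
      simp only [mwt, if_neg hS]; ring
  set R := ∏ j ∈ (Finset.univ.erase (a v)).erase (b v),
    (if ∃ u ∈ S, a u = j ∨ b u = j then 1 else t j) with hR
  have hR' : ∀ z w : ℂ, ∏ j ∈ (Finset.univ.erase (a v)).erase (b v),
    (if ∃ u ∈ S, a u = j ∨ b u = j then 1 else
      t j + (if j = a v then z else 0) + (if j = b v then w else 0)) = R := by
    intro z w
    refine Finset.prod_congr rfl fun j hj => ?_
    simp only [Finset.mem_erase, Finset.mem_univ, and_true] at hj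
    rw [if_neg hj.1, if_neg hj.2, add_zero, add_zero]
  have hins : ∀ j, (j = a v ∨ j = b v) → (∃ u ∈ S, a u = j ∨ b u = j) →
      mwt G a b lam t (insert v S) = 0 := by
    rintro j hj ⟨u, hu, huj⟩
    unfold mwt
    rw [if_neg]
    intro h
    refine h u (Finset.mem_insert_of_mem hu) v (Finset.mem_insert_self _ _) ((hG u v).2 ⟨?_, j, huj, ?_⟩)
    · rintro rfl; exact hv hu
    · tauto
  have hexp : ∀ t', mwt G a b lam t' S = (∏ v ∈ S, lam v) *
    ((if ∃ u ∈ S, a u = a v ∨ b u = a v then 1 else t' (a v)) *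
    ((if ∃ u ∈ S, a u = b v ∨ b u = b v then 1 else t' (b v)) *
    ∏ j ∈ (Finset.univ.erase (a v)).erase (b v),
    (if ∃ u ∈ S, a u = j ∨ b u = j then 1 else t' j))) := by
    intro t'
    unfold mwt
    rw [if_pos hS, prod_split _ _ _ (hab v)]
  simp only [hexp, hR', ← hR, if_true, if_neg (hab v), if_neg (hab v).symm, add_zero]
  set L := ∏ v ∈ S, lam v
  by_cases ha : ∃ u ∈ S, a u = a v ∨ b u = a v
  · rw [hins _ (Or.inl rfl) ha]
    simp only [if_pos ha]
    by_cases hb : ∃ u ∈ S, a u = b v ∨ b u = b v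
    · simp only [if_pos hb]
      exact ⟨0, 0, 0, by ring, fun z w => by ring⟩
    · simp only [if_neg hb]
      exact ⟨0, L * R, 0, by ring, fun z w => by ring⟩
  by_cases hb : ∃ u ∈ S, a u = b v ∨ b u = b v
  · rw [hins _ (Or.inr rfl) hb]
    simp only [if_pos hb, if_neg ha]
    exact ⟨L * R, 0, 0, by ring, fun z w => by ring⟩
  simp only [if_neg hb, if_neg ha]
  refine ⟨L * R * t (b v), L * R * t (a v), L * R, ?_, fun z w => by ring⟩
  have hM : ∀ u ∈ insert v S, ∀ w ∈ insert v S, ¬ G.Adj u w := by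
    have h1 : ∀ u ∈ S, ¬ G.Adj u v := by
      intro u hu hadj
      obtain ⟨-, j, h1, h2⟩ := (hG u v).1 hadj
      rcases h2 with rfl | rfl
      · exact ha ⟨u, hu, h1⟩
      · exact hb ⟨u, hu, h1⟩
    intro u hu w hw
    rw [Finset.mem_insert] at hu hw
    rcases hu with rfl | hu <;> rcases hw with rfl | hw
    · exact G.irrefl
    · exact fun h => h1 w hw h.symm
    · exact h1 u hu
    · exact hS u hu w hw
  unfold mwt
  rw [if_pos hM, prod_split _ _ _ (hab v), if_pos ⟨v, by simp, Or.inl rfl⟩,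
    if_pos ⟨v, by simp, Or.inr rfl⟩, Finset.prod_insert hv]
  have : ∏ j ∈ (Finset.univ.erase (a v)).erase (b v),
    (if ∃ u ∈ insert v S, a u = j ∨ b u = j then 1 else t j) = R := by
    refine Finset.prod_congr rfl fun j hj => ?_
    simp only [Finset.mem_erase, Finset.mem_univ, and_true] at hj
    have : (∃ u ∈ insert v S, a u = j ∨ b u = j) ↔ (∃ u ∈ S, a u = j ∨ b u = j) := by
      simp only [Finset.mem_insert, exists_eq_or_imp, or_iff_right_iff_imp]
      rintro (h | h)
      · exact absurd h.symm hj.2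
      · exact absurd h.symm hj.1
    simp only [this]
  rw [this]
  ring

lemma main_ind_s3 {V J : Type} [Fintype J] (G : SimpleGraph V) (a b : V → J)
    (hab : ∀ v, a v ≠ b v)
    (hG : ∀ u v, G.Adj u v ↔ u ≠ v ∧ ∃ j, (a u = j ∨ b u = j) ∧ (a v = j ∨ b v = j))
    (lam : V → ℂ) (c : ℝ) (hc : 0 < c)
    (hl : ∀ v, (lam v).im ^ 2 < 4 * c ^ 2 * (c ^ 2 + (lam v).re)) (W : Finset V) :
    ∀ t : J → ℂ, (∀ j, 0 < (t j).re) →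
      (∀ j, ((W.filter (fun v => a v = j ∨ b v = j)).card : ℝ) * c ≤ (t j).re) →
      ∑ S ∈ W.powerset, mwt G a b lam t S ≠ 0 := by
  induction W using Finset.induction_on with
  | empty =>
    intro t ht _
    simp only [Finset.powerset_empty, Finset.sum_singleton, mwt]
    simp only [Finset.notMem_empty, false_and, exists_false, if_false, Finset.prod_empty, one_mul,
      IsEmpty.forall_iff, implies_true, if_true]
    refine Finset.prod_ne_zero_iff.2 fun j _ h => ?_
    have := ht j
    simp [h] at this
  | insert v W hv ih =>
    intro t ht hd
    have hE : ∀ S : Finset V, ∃ B C D : ℂ, S ∈ W.powerset →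
      (mwt G a b lam t (insert v S) = lam v * D ∧
      ∀ z w : ℂ, mwt G a b lam
        (fun j => t j + (if j = a v then z else 0) + (if j = b v then w else 0)) S
        = mwt G a b lam t S + B * z + C * w + D * (z * w)) := by
      intro S
      by_cases h : S ∈ W.powerset
      · obtain ⟨B, C, D, h'⟩ := mwt_expand G a b hab hG lam t S v
          (fun h' => hv (Finset.mem_powerset.1 h h'))
        exact ⟨B, C, D, fun _ => h'⟩
      · exact ⟨0, 0, 0, fun h' => absurd h' h⟩
    choose B C D hBCD using hE
    rw [Finset.sum_powerset_insert hv, Finset.sum_congr rfl (fun S hS => (hBCD S hS).1),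
      ← Finset.mul_sum]
    refine asano_aux _ (∑ S ∈ W.powerset, B S) (∑ S ∈ W.powerset, C S) _ _ c hc ?_ (hl v)
    intro z w hz hw
    have hsum := Finset.sum_congr rfl (fun S hS => (hBCD S hS).2 z w)
    rw [Finset.sum_add_distrib, Finset.sum_add_distrib, Finset.sum_add_distrib,
      ← Finset.sum_mul, ← Finset.sum_mul, ← Finset.sum_mul] at hsum
    rw [← hsum]
    have hmain : ∀ j, 0 < (t j + (if j = a v then z else 0) + (if j = b v then w else 0)).re ∧
        ((W.filter (fun v => a v = j ∨ b v = j)).card : ℝ) * c ≤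
          (t j + (if j = a v then z else 0) + (if j = b v then w else 0)).re := by
      intro j
      have hdj := hd j
      have htj := ht j
      rw [Finset.filter_insert] at hdj
      have hnn : 0 ≤ ((W.filter (fun v => a v = j ∨ b v = j)).card : ℝ) * c := by positivity
      by_cases h1 : j = a v
      · have h2 : j ≠ b v := h1 ▸ hab v
        rw [if_pos (Or.inl h1.symm), Finset.card_insert_of_notMem (by simp [hv])] at hdj
        push_cast at hdj
        simp only [if_pos h1, if_neg h2, add_zero, Complex.add_re]
        constructor <;> linarith
      by_cases h2 : j = b v
      · rw [if_pos (Or.inr h2.symm), Finset.card_insert_of_notMem (by simp [hv])] at hdj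
        push_cast at hdj
        simp only [if_pos h2, if_neg h1, add_zero, Complex.add_re]
        constructor <;> linarith
      · rw [if_neg (by tauto)] at hdj
        simp only [if_neg h2, if_neg h1, add_zero]
        exact ⟨htj, hdj⟩
    exact ih _ (fun j => (hmain j).1) (fun j => (hmain j).2)

lemma exists_slots {V : Type} (ℓ : ℕ) (v : V) (F : Finset (Fin ℓ)) (h : F.card ≤ 2) :
    ∃ p q : Fin ℓ ⊕ (V × Bool), p ≠ q ∧ (∀ i, (p = Sum.inl i ∨ q = Sum.inl i) ↔ i ∈ F) ∧
      (∀ u : V × Bool, (p = Sum.inr u ∨ q = Sum.inr u) → u.1 = v) := by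
  have h3 : F.card = 0 ∨ F.card = 1 ∨ F.card = 2 := by omega
  rcases h3 with h | h | h
  · rw [Finset.card_eq_zero] at h
    subst h
    exact ⟨.inr (v, true), .inr (v, false), by simp, by simp, by
      rintro u (h | h) <;> simp only [Sum.inr.injEq] at h <;> rw [← h]⟩
  · obtain ⟨x, rfl⟩ := Finset.card_eq_one.1 h
    exact ⟨.inl x, .inr (v, false), by simp, by simp [eq_comm], by
      rintro u (h | h)
      · simp at h
      · simp only [Sum.inr.injEq] at h; rw [← h]⟩
  · obtain ⟨x, y, hxy, rfl⟩ := Finset.card_eq_two.1 h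
    exact ⟨.inl x, .inl y, by simpa using hxy, by simp [eq_comm], by simp⟩

/-- if `G` admits a clique cover `V₁, …, V_ℓ` (each `V_i` a
clique, every edge inside some `V_i`, every vertex in at most two `V_i`, and
`|V_i| ≤ k₀`), then the multivariate independence polynomial is nonzero
whenever all vertex weights lie in `R(k₀²/4)`. -/
theorem stmt3 {V : Type} [Fintype V] (G : SimpleGraph V) (k₀ ℓ : ℕ)
    (Vs : Fin ℓ → Finset V)
    (hclique : ∀ i, G.IsClique (↑(Vs i) : Set V))
    (hedge : ∀ u v : V, G.Adj u v → ∃ i, u ∈ Vs i ∧ v ∈ Vs i)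
    (htwo : ∀ v : V, (Finset.univ.filter (fun i : Fin ℓ => v ∈ Vs i)).card ≤ 2)
    (hsize : ∀ i, (Vs i).card ≤ k₀)
    (lam : V → ℂ) (hlam : ∀ v, lam v ∈ parabR ((k₀ : ℝ) ^ 2 / 4)) :
    indepPoly G lam ≠ 0 := by
  rcases Nat.eq_zero_or_pos k₀ with rfl | hk
  · have : IsEmpty V := ⟨fun v => by
      have := hlam v
      simp only [parabR, Set.mem_ofPred_eq] at this
      norm_num at this
      nlinarith [sq_nonneg (lam v).im]⟩
    simp [indepPoly, indepPolyOn, Finset.univ_eq_empty]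
  have hkR : (0 : ℝ) < k₀ := by exact_mod_cast hk
  choose a b hab hin hout using fun v => exists_slots ℓ v _ (htwo v)
  simp only [Finset.mem_filter, Finset.mem_univ, true_and] at hin
  have hG : ∀ u v, G.Adj u v ↔ u ≠ v ∧ ∃ j, (a u = j ∨ b u = j) ∧ (a v = j ∨ b v = j) := by
    intro u v
    constructor
    · intro h
      obtain ⟨i, hu, hv⟩ := hedge u v h
      exact ⟨h.ne, .inl i, (hin u i).2 hu, (hin v i).2 hv⟩
    · rintro ⟨hne, j, hu, hv⟩
      rcases j with i | x
      · exact hclique i ((hin u i).1 hu) ((hin v i).1 hv) hne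
      · exact absurd ((hout u x hu).symm.trans (hout v x hv)) hne
  have key := main_ind_s3 G a b hab hG lam (1 / k₀) (by positivity) (fun v => by
    have := hlam v
    simp only [parabR, Set.mem_ofPred_eq] at this
    refine this.trans_eq ?_
    field_simp
    ring) Finset.univ (fun _ => 1) (by simp) (by
    intro j
    have : (Finset.univ.filter (fun v => a v = j ∨ b v = j)).card ≤ k₀ := by
      rcases j with i | x
      · refine le_trans (Finset.card_le_card ?_) (hsize i)
        intro v hv
        exact (hin v i).1 (by simpa using hv)
      · refine le_trans (Finset.card_le_card (t := {x.1}) ?_) (by rw [Finset.card_singleton]; exact hk)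
        intro v hv
        simpa using (hout v x (by simpa using hv)).symm
    have h2 : ((Finset.univ.filter (fun v => a v = j ∨ b v = j)).card : ℝ) ≤ k₀ := by
      exact_mod_cast this
    rw [mul_one_div, Complex.one_re]
    refine (div_le_one hkR).2 ?_
    refine le_trans (le_of_eq ?_) h2
    congr!)
  intro h0
  apply key
  rw [← h0]
  unfold indepPoly indepPolyOn
  refine Finset.sum_congr rfl fun S _ => ?_
  simp only [mwt, ite_self, Finset.prod_const_one, mul_one]
end

section
/- Let k ≥ 1 be an integer, let a₁, …, a_k ∈ R(k), and let z₁, …, z_k ∈ H(1/2). Then 1 + Σ_{j=1}^{k} a_j · z_j^{-1} ∈ H(1/2). -/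
attribute [local instance] Classical.propDecidable

/-- if `a₁, …, a_k ∈ R(k)` and `z₁, …, z_k ∈ H(1/2)` then
`1 + Σ_j a_j · z_j⁻¹ ∈ H(1/2)`. -/
theorem stmt4 (k : ℕ) (hk : 1 ≤ k) (a z : Fin k → ℂ)
    (ha : ∀ j, a j ∈ parabR k) (hz : ∀ j, z j ∈ halfH (1 / 2)) :
    1 + ∑ j, a j * (z j)⁻¹ ∈ halfH (1 / 2) := by
  have hk0 : (0 : ℝ) < k := by exact_mod_cast hk
  have key : ∀ j, -(1 / (2 * (k : ℝ))) ≤ (a j * (z j)⁻¹).re := by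
    intro j
    have h1 : (a j).im ^ 2 < (a j).re / k + 1 / (4 * (k : ℝ) ^ 2) := ha j
    have h2 : (1 / 2 : ℝ) ≤ (z j).re := hz j
    have hz0 : z j ≠ 0 := by
      intro h
      rw [h] at h2
      norm_num at h2
    have hw : ‖(z j)⁻¹ - 1‖ ≤ 1 := by
      have e : (z j)⁻¹ - 1 = (1 - z j) / z j := by field_simp
      rw [e, norm_div, div_le_one (norm_pos_iff.mpr hz0)]
      rw [← sq_le_sq₀ (norm_nonneg _) (norm_nonneg _), Complex.sq_norm, Complex.sq_norm,
        Complex.normSq_apply, Complex.normSq_apply]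
      simp only [Complex.sub_re, Complex.sub_im, Complex.one_re, Complex.one_im]
      nlinarith
    set c : ℝ := 1 / (2 * (k : ℝ)) with hc
    have hc0 : 0 < c := by positivity
    have h3 : (a j).im ^ 2 < 2 * c * (a j).re + c ^ 2 := by
      have e : 2 * c * (a j).re + c ^ 2 = (a j).re / k + 1 / (4 * (k : ℝ) ^ 2) := by
        rw [hc]
        field_simp
        ring
      rw [e]
      exact h1
    have h4 : 0 ≤ (a j).re + c := by
      by_contra h
      nlinarith [sq_nonneg (a j).im]
    have hn : ‖a j‖ ≤ (a j).re + c := by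
      rw [← sq_le_sq₀ (norm_nonneg _) h4, Complex.sq_norm, Complex.normSq_apply]
      nlinarith
    have e : a j * (z j)⁻¹ = a j + a j * ((z j)⁻¹ - 1) := by ring
    have h5 := (abs_le.mp (Complex.abs_re_le_norm (a j * ((z j)⁻¹ - 1)))).1
    have h6 : ‖a j * ((z j)⁻¹ - 1)‖ ≤ ‖a j‖ := by
      rw [norm_mul]
      exact mul_le_of_le_one_right (norm_nonneg _) hw
    rw [e, Complex.add_re]
    linarith
  have hs : ∑ _j : Fin k, -(1 / (2 * (k : ℝ))) ≤ ∑ j, (a j * (z j)⁻¹).re :=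
    Finset.sum_le_sum fun j _ => key j
  have hs2 : ∑ _j : Fin k, -(1 / (2 * (k : ℝ))) = -(1 / 2) := by
    rw [Finset.sum_const, Finset.card_univ, Fintype.card_fin, nsmul_eq_mul]
    field_simp
  show (1 / 2 : ℝ) ≤ (1 + ∑ j, a j * (z j)⁻¹).re
  rw [Complex.add_re, Complex.re_sum, Complex.one_re]
  linarith
end

section
/- Let t ≥ 1 and Δ ≥ 3 be integers and let G = (V,E) be a finite S_{t,t,t}-free simple graph of maximum degree at most Δ, with a fixed root vertex u ∈ V. Then for every admissible pair (L,U) with respect to (G,u), one has |L| ≤ 2·vol(Δ, 2t), where vol(Δ, t) = 1 + Δ·((Δ−1)^t − 1)/(Δ−2). -/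
attribute [local instance] Classical.propDecidable

/-- The boundary `∂X` of a set of vertices: the vertices outside `X` that have a
neighbour in `X`, with the special convention `∂∅ = {u}` for the root `u`. -/
noncomputable def bdry {V : Type*} [Fintype V] (G : SimpleGraph V) (u : V)
    (X : Finset V) : Finset V :=
  if X = ∅ then {u}
  else Finset.univ.filter (fun v => v ∉ X ∧ ∃ x ∈ X, G.Adj v x)

/-- Admissible pairs `(L, U)` with respect to a graph `G` and root vertex `u`. -/
inductive Admissible {V : Type*} [Fintype V] (G : SimpleGraph V) (u : V) :
    Finset V → Finset V → Prop
  | base : Admissible G u ∅ Finset.univ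
  | root : Admissible G u {u} (Finset.univ \ {u})
  | step (L' U' L : Finset V) :
      Admissible G u L' U' →
      L.Nonempty →
      L ⊆ bdry G u L' ∩ U' →
      (∀ a ∈ L, ∀ b ∈ L, ¬ G.Adj a b) →
      Admissible G u L (U' \ bdry G u L')

/-- `vol(Δ, t) = 1 + Δ·((Δ−1)^t − 1)/(Δ−2)`. -/
noncomputable def vol (Δ t : ℕ) : ℝ :=
  1 + (Δ : ℝ) * (((Δ : ℝ) - 1) ^ t - 1) / ((Δ : ℝ) - 2)

namespace ClawAux

lemma claw_of {V : Type*} (G : SimpleGraph V) (t : ℕ) (p : Fin 3 → ℕ → V) (c : V)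
    (h0 : ∀ i, p i 0 = c)
    (hadj : ∀ i a, a < t → G.Adj (p i a) (p i (a + 1)))
    (hnon : ∀ i a b, b ≤ t → a + 1 < b → ¬ G.Adj (p i a) (p i b))
    (hinj : ∀ i a b, b ≤ t → a < b → p i a ≠ p i b)
    (hx : ∀ i j a b, i < j → 1 ≤ a → a ≤ t → 1 ≤ b → b ≤ t →
      p i a ≠ p j b ∧ ¬ G.Adj (p i a) (p j b)) :
    Nonempty (subdividedClaw t ↪g G) := by
  have hc : ∀ i a, a < t → c ≠ p i (a + 1) := by
    intro i a ha
    rw [← h0 i]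
    exact hinj i 0 (a + 1) (by omega) (by omega)
  have hca : ∀ i a, a < t → (G.Adj c (p i (a + 1)) ↔ a = 0) := by
    intro i a ha
    rw [← h0 i]
    constructor
    · intro h
      by_contra hne
      exact hnon i 0 (a + 1) (by omega) (by omega) h
    · rintro rfl
      exact hadj i 0 ha
  have hx' : ∀ i j a b, i ≠ j → a < t → b < t →
      p i (a + 1) ≠ p j (b + 1) ∧ ¬ G.Adj (p i (a + 1)) (p j (b + 1)) := by
    intro i j a b hij ha hb
    rcases lt_or_gt_of_ne hij with h | h
    · exact hx i j _ _ h (by omega) (by omega) (by omega) (by omega)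
    · have := hx j i (b + 1) (a + 1) h (by omega) (by omega) (by omega) (by omega)
      exact ⟨this.1.symm, fun h => this.2 h.symm⟩
  have hs : ∀ i a b, a < t → b < t →
      (G.Adj (p i (a + 1)) (p i (b + 1)) ↔ (a + 1 = b ∨ b + 1 = a)) := by
    intro i a b ha hb
    constructor
    · intro h
      by_contra hne
      rcases lt_trichotomy a b with hab | hab | hab
      · exact hnon i (a + 1) (b + 1) (by omega) (by omega) h
      · subst hab; exact G.loopless.irrefl _ h
      · exact hnon i (b + 1) (a + 1) (by omega) (by omega) h.symm
    · rintro (rfl | rfl)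
      · exact hadj i _ (by omega)
      · exact (hadj i _ (by omega)).symm
  have hi : ∀ i a b, a < t → b < t → p i (a + 1) = p i (b + 1) → a = b := by
    intro i a b ha hb h
    rcases lt_trichotomy a b with hab | hab | hab
    · exact absurd h (hinj i _ _ (by omega) (by omega))
    · exact hab
    · exact absurd h.symm (hinj i _ _ (by omega) (by omega))
  let f : Option (Fin 3 × Fin t) → V := fun o =>
    match o with
    | none => c
    | some (i, j) => p i (j + 1)
  refine ⟨⟨⟨f, ?_⟩, ?_⟩⟩
  · rintro (_ | ⟨i, j⟩) (_ | ⟨i', j'⟩) h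
    · rfl
    · exact absurd h (hc i' j' j'.2)
    · exact absurd h.symm (hc i j j.2)
    · by_cases hii : i = i'
      · subst hii
        have := hi i j j' j.2 j'.2 h
        rw [Fin.ext this]
      · exact absurd h (hx' i i' j j' hii j.2 j'.2).1
  · rintro (_ | ⟨i, j⟩) (_ | ⟨i', j'⟩)
    · simp [f, subdividedClaw]
    · change G.Adj c (p i' (j' + 1)) ↔ _
      simp [subdividedClaw, hca i' j' j'.2]
    · have := hca i j j.2
      rw [G.adj_comm] at this
      change G.Adj (p i (j + 1)) c ↔ _
      simp [subdividedClaw, this]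
    · by_cases hii : i = i'
      · subst hii
        have := hs i j j' j.2 j'.2
        change G.Adj (p i (j + 1)) (p i (j' + 1)) ↔ _
        simp only [subdividedClaw, this, SimpleGraph.fromRel_adj, ne_eq, Option.some.injEq,
          Prod.mk.injEq, true_and, Fin.ext_iff]
        omega
      · have := (hx' i i' j j' hii j.2 j'.2).2
        change G.Adj (p i (j + 1)) (p i' (j' + 1)) ↔ _
        simp [subdividedClaw, this, hii, Ne.symm hii]

lemma claw_of3 {V : Type*} (G : SimpleGraph V) (t : ℕ) (p q r : ℕ → V) 
    (hq0 : q 0 = p 0) (hr0 : r 0 = p 0)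
    (hadj : ∀ a, a < t → G.Adj (p a) (p (a + 1)) ∧ G.Adj (q a) (q (a + 1)) ∧
      G.Adj (r a) (r (a + 1)))
    (hnon : ∀ a b, b ≤ t → a + 1 < b → ¬ G.Adj (p a) (p b) ∧ ¬ G.Adj (q a) (q b) ∧
      ¬ G.Adj (r a) (r b))
    (hinj : ∀ a b, b ≤ t → a < b → p a ≠ p b ∧ q a ≠ q b ∧ r a ≠ r b)
    (hpq : ∀ a b, 1 ≤ a → a ≤ t → 1 ≤ b → b ≤ t → p a ≠ q b ∧ ¬ G.Adj (p a) (q b))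
    (hpr : ∀ a b, 1 ≤ a → a ≤ t → 1 ≤ b → b ≤ t → p a ≠ r b ∧ ¬ G.Adj (p a) (r b))
    (hqr : ∀ a b, 1 ≤ a → a ≤ t → 1 ≤ b → b ≤ t → q a ≠ r b ∧ ¬ G.Adj (q a) (r b)) :
    Nonempty (subdividedClaw t ↪g G) := by
  refine claw_of G t ![p, q, r] (p 0) ?_ ?_ ?_ ?_ ?_
  · intro i; fin_cases i <;> simp [hq0, hr0]
  · intro i a ha
    have := hadj a ha
    fin_cases i
    exacts [this.1, this.2.1, this.2.2]
  · intro i a b hb ha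
    have := hnon a b hb ha
    fin_cases i
    exacts [this.1, this.2.1, this.2.2]
  · intro i a b hb ha
    have := hinj a b hb ha
    fin_cases i
    exacts [this.1, this.2.1, this.2.2]
  · intro i j a b hij h1 h2 h3 h4
    have e1 := hpq a b h1 h2 h3 h4
    have e2 := hpr a b h1 h2 h3 h4
    have e3 := hqr a b h1 h2 h3 h4
    fin_cases i <;> fin_cases j <;> first | exact absurd hij (by decide) | assumption

/-- Layered graph. -/
structure Lay {W : Type*} (H : SimpleGraph W) (ρ : W → ℕ) : Prop where
  adj : ∀ a b, H.Adj a b → ρ a = ρ b + 1 ∨ ρ b = ρ a + 1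
  par : ∀ a n, ρ a = n + 1 → ∃ b, H.Adj b a ∧ ρ b = n
  root : ∀ a b, ρ a = 0 → ρ b = 0 → a = b

/-- `p` is a monotone path through layers `m..k`. -/
structure Pth {W : Type*} (H : SimpleGraph W) (ρ : W → ℕ) (p : ℕ → W) (m k : ℕ) : Prop where
  rk : ∀ i, m ≤ i → i ≤ k → ρ (p i) = i
  adj : ∀ i, m ≤ i → i < k → H.Adj (p i) (p (i + 1))

def Anc {W : Type*} (H : SimpleGraph W) (ρ : W → ℕ) (a x : W) (m k : ℕ) : Prop :=
  ∃ p, Pth H ρ p m k ∧ p m = a ∧ p k = x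

section
variable {W : Type*} {H : SimpleGraph W} {ρ : W → ℕ}

lemma Pth.anc {p : ℕ → W} {m k : ℕ} (h : Pth H ρ p m k) (i : ℕ) (hm : m ≤ i) :
    Anc H ρ (p i) (p k) i k :=
  ⟨p, ⟨fun j h1 h2 => h.rk j (by omega) h2, fun j h1 h2 => h.adj j (by omega) h2⟩, rfl, rfl⟩

lemma Pth.extend {p : ℕ → W} {i k : ℕ} (h : Pth H ρ p (i + 1) k) (a : W) (hik : i < k)
    (ha : ρ a = i) (hadj : H.Adj a (p (i + 1))) : Anc H ρ a (p k) i k := by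
  refine ⟨fun j => if j ≤ i then a else p j, ⟨?_, ?_⟩, by simp, by simp; omega⟩
  · intro j h1 h2
    by_cases hj : j ≤ i
    · simp [hj]; omega
    · simp [hj]; exact h.rk j (by omega) h2
  · intro j h1 h2
    by_cases hj : j ≤ i
    · obtain rfl : j = i := by omega
      simpa using hadj
    · have : ¬ (j + 1 ≤ i) := by omega
      simp [hj, this]; exact h.adj j (by omega) h2

lemma Pth.mono {p : ℕ → W} {m k : ℕ} (h : Pth H ρ p m k) (i : ℕ) (hm : m ≤ i) :
    Pth H ρ p i k :=
  ⟨fun j h1 h2 => h.rk j (by omega) h2, fun j h1 h2 => h.adj j (by omega) h2⟩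

lemma Pth.anc_of_adj {p : ℕ → W} {m k : ℕ} (h : Pth H ρ p m k) (i : ℕ) (hm : m ≤ i + 1)
    (hik : i < k) (a : W) (ha : ρ a = i) (hadj : H.Adj a (p (i + 1))) :
    Anc H ρ a (p k) i k := (h.mono (i + 1) hm).extend a hik ha hadj

lemma Lay.exists_anc (hl : Lay H ρ) (x : W) (k : ℕ) (hx : ρ x = k) (d : ℕ) (hd : d ≤ k) :
    ∃ a, Anc H ρ a x (k - d) k := by
  induction d with
  | zero =>
    refine ⟨x, fun _ => x, ⟨?_, ?_⟩, rfl, rfl⟩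
    · intro i h1 h2; omega
    · intro i h1 h2; omega
  | succ d ih =>
    obtain ⟨a, p, hp, h1, h2⟩ := ih (by omega)
    obtain ⟨b, hb, hb'⟩ := hl.par a (k - (d + 1))
      (by rw [← h1, hp.rk _ le_rfl (by omega)]; omega)
    refine ⟨b, ?_⟩
    rw [← h2]
    have e : k - (d + 1) + 1 = k - d := by omega
    exact hp.anc_of_adj _ (by omega) (by omega) b hb' (by rw [e, h1]; exact hb)

/-- Paths without common ancestors above layer `m` are separated above `m`. -/
lemma Lay.sep (hl : Lay H ρ) {p q : ℕ → W} {m k m' k' n : ℕ} (hp : Pth H ρ p m k)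
    (hq : Pth H ρ q m' k') (hm : m ≤ n + 1) (hm' : m' ≤ n + 1)
    (hno : ∀ i, n < i → i ≤ k → i ≤ k' → ∀ a, Anc H ρ a (p k) i k → ¬ Anc H ρ a (q k') i k')
    (i j : ℕ) (hi : n < i) (hik : i ≤ k) (hj : n < j) (hjk : j ≤ k') :
    p i ≠ q j ∧ ¬ H.Adj (p i) (q j) := by
  have r1 := hp.rk i (by omega) hik
  have r2 := hq.rk j (by omega) hjk
  constructor
  · intro h
    obtain rfl : i = j := by rw [← r1, ← r2, h]
    exact hno i hi hik hjk _ (hp.anc i (by omega)) (h ▸ hq.anc i (by omega))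
  · intro h
    rcases hl.adj _ _ h with e | e
    · obtain rfl : i = j + 1 := by omega
      exact hno j hj (by omega) hjk _
        (hp.anc_of_adj j (by omega) (by omega) _ r2 h.symm) (hq.anc j (by omega))
    · obtain rfl : j = i + 1 := by omega
      exact hno i hi hik (by omega) _
        (hp.anc i (by omega)) (hq.anc_of_adj i (by omega) (by omega) _ r1 h)

lemma nonadj (hl : Lay H ρ) {a b : W} (h : ρ a + 1 ≠ ρ b) (h' : ρ b + 1 ≠ ρ a) :
    ¬ H.Adj a b := by
  intro hh
  rcases hl.adj _ _ hh with e | e <;> omega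

lemma nerk {a b : W} (h : ρ a ≠ ρ b) : a ≠ b := fun e => h (e ▸ rfl)

/-- Common ancestor of all three. -/
lemma case1 (hl : Lay H ρ) (t m k : ℕ) (p q r : ℕ → W) (hmk : m + t < k)
    (hp : Pth H ρ p m k) (hq : Pth H ρ q m k) (hr : Pth H ρ r m k)
    (e1 : q m = p m) (e2 : r m = p m)
    (hpq : ∀ i j, m < i → i ≤ k → m < j → j ≤ k → p i ≠ q j ∧ ¬ H.Adj (p i) (q j))
    (hpr : ∀ i j, m < i → i ≤ k → m < j → j ≤ k → p i ≠ r j ∧ ¬ H.Adj (p i) (r j))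
    (hqr : ∀ i j, m < i → i ≤ k → m < j → j ≤ k → q i ≠ r j ∧ ¬ H.Adj (q i) (r j)) :
    Nonempty (subdividedClaw t ↪g H) := by
  have hp1 := hp.rk
  have hq1 := hq.rk
  have hr1 := hr.rk
  refine claw_of3 H t (fun a => p (m + a)) (fun a => q (m + a)) (fun a => r (m + a))
    e1 e2 ?_ ?_ ?_ ?_ ?_ ?_
  · intro a ha
    exact ⟨hp.adj (m + a) (by omega) (by omega), hq.adj (m + a) (by omega) (by omega),
      hr.adj (m + a) (by omega) (by omega)⟩
  · intro a b hb hab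
    refine ⟨nonadj hl ?_ ?_, nonadj hl ?_ ?_, nonadj hl ?_ ?_⟩ <;> grind
  · intro a b hb hab
    refine ⟨nerk (ρ := ρ) ?_, nerk (ρ := ρ) ?_, nerk (ρ := ρ) ?_⟩ <;> grind
  · intro a b h1 h2 h3 h4
    exact hpq _ _ (by omega) (by omega) (by omega) (by omega)
  · intro a b h1 h2 h3 h4
    exact hpr _ _ (by omega) (by omega) (by omega) (by omega)
  · intro a b h1 h2 h3 h4
    exact hqr _ _ (by omega) (by omega) (by omega) (by omega)

/-- Centre `p (m+1)`, adjacent to `q m` and `r m`. -/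
lemma case2 (hl : Lay H ρ) (t m k : ℕ) (p q r : ℕ → W) (hmk : m + t < k)
    (hp : Pth H ρ p m k) (hq : Pth H ρ q m k) (hr : Pth H ρ r m k)
    (e1 : H.Adj (q m) (p (m + 1))) (e2 : H.Adj (r m) (p (m + 1)))
    (n1 : ¬ H.Adj (q m) (r (m + 1))) (n2 : ¬ H.Adj (r m) (q (m + 1))) (n3 : q m ≠ r m)
    (hpq : ∀ i j, m < i → i ≤ k → m < j → j ≤ k → p i ≠ q j ∧ ¬ H.Adj (p i) (q j))
    (hpr : ∀ i j, m < i → i ≤ k → m < j → j ≤ k → p i ≠ r j ∧ ¬ H.Adj (p i) (r j))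
    (hqr : ∀ i j, m < i → i ≤ k → m < j → j ≤ k → q i ≠ r j ∧ ¬ H.Adj (q i) (r j)) :
    Nonempty (subdividedClaw t ↪g H) := by
  have hp1 := hp.rk
  have hq1 := hq.rk
  have hr1 := hr.rk
  -- separation facts, with the bottom vertices included
  have spq : ∀ i j, m + 1 < i → i ≤ k → m ≤ j → j ≤ k → p i ≠ q j ∧ ¬ H.Adj (p i) (q j) := by
    intro i j h1 h2 h3 h4
    rcases Nat.eq_or_lt_of_le h3 with rfl | h3
    · exact ⟨nerk (ρ := ρ) (by grind), nonadj hl (by grind) (by grind)⟩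
    · exact hpq i j (by omega) h2 h3 h4
  have spr : ∀ i j, m + 1 < i → i ≤ k → m ≤ j → j ≤ k → p i ≠ r j ∧ ¬ H.Adj (p i) (r j) := by
    intro i j h1 h2 h3 h4
    rcases Nat.eq_or_lt_of_le h3 with rfl | h3
    · exact ⟨nerk (ρ := ρ) (by grind), nonadj hl (by grind) (by grind)⟩
    · exact hpr i j (by omega) h2 h3 h4
  have sqr : ∀ i j, m ≤ i → i ≤ k → m ≤ j → j ≤ k → q i ≠ r j ∧ ¬ H.Adj (q i) (r j) := by
    intro i j h1 h2 h3 h4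
    rcases Nat.eq_or_lt_of_le h3 with rfl | h3
    · rcases Nat.eq_or_lt_of_le h1 with rfl | h1
      · exact ⟨n3, nonadj hl (by grind) (by grind)⟩
      · refine ⟨nerk (ρ := ρ) (by grind), ?_⟩
        by_cases hi : i = m + 1
        · subst hi; exact fun h => n2 h.symm
        · exact nonadj hl (by grind) (by grind)
    · rcases Nat.eq_or_lt_of_le h1 with rfl | h1
      · refine ⟨nerk (ρ := ρ) (by grind), ?_⟩
        by_cases hi : j = m + 1
        · subst hi; exact n1
        · exact nonadj hl (by grind) (by grind)
      · exact hqr i j (by omega) h2 h3 h4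
  refine claw_of3 H t (fun a => p (m + 1 + a)) (fun a => if a = 0 then p (m + 1) else q (m + a - 1))
    (fun a => if a = 0 then p (m + 1) else r (m + a - 1))
    (by simp) (by simp) ?_ ?_ ?_ ?_ ?_ ?_
  · intro a ha
    refine ⟨hp.adj (m + 1 + a) (by omega) (by omega), ?_, ?_⟩
    · by_cases h : a = 0
      · subst h; simpa using e1.symm
      · have := hq.adj (m + a - 1) (by omega) (by omega)
        rw [show m + a - 1 + 1 = m + a by omega] at this
        simpa [h] using this
    · by_cases h : a = 0
      · subst h; simpa using e2.symm
      · have := hr.adj (m + a - 1) (by omega) (by omega)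
        rw [show m + a - 1 + 1 = m + a by omega] at this
        simpa [h] using this
  · intro a b hb hab
    refine ⟨nonadj hl (by grind) (by grind), ?_, ?_⟩
    · have hb0 : b ≠ 0 := by omega
      by_cases h : a = 0
      · simp only [h, hb0, if_true, if_false]
        exact (hpq _ _ (by omega) (by omega) (by omega) (by omega)).2
      · simp only [h, hb0, if_false]
        exact nonadj hl (by grind) (by grind)
    · have hb0 : b ≠ 0 := by omega
      by_cases h : a = 0
      · simp only [h, hb0, if_true, if_false]
        exact (hpr _ _ (by omega) (by omega) (by omega) (by omega)).2
      · simp only [h, hb0, if_false]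
        exact nonadj hl (by grind) (by grind)
  · intro a b hb hab
    have hb0 : b ≠ 0 := by omega
    refine ⟨nerk (ρ := ρ) (by grind), ?_, ?_⟩
    · by_cases h : a = 0
      · simp only [h, hb0, if_true, if_false]
        by_cases hb1 : b = 1
        · subst hb1; exact e1.ne.symm
        · exact (hpq _ _ (by omega) (by omega) (by omega) (by omega)).1
      · simp only [h, hb0, if_false]
        exact nerk (ρ := ρ) (by grind)
    · by_cases h : a = 0
      · simp only [h, hb0, if_true, if_false]
        by_cases hb1 : b = 1
        · subst hb1; exact e2.ne.symm
        · exact (hpr _ _ (by omega) (by omega) (by omega) (by omega)).1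
      · simp only [h, hb0, if_false]
        exact nerk (ρ := ρ) (by grind)
  · intro a b h1 h2 h3 h4
    have hb0 : b ≠ 0 := by omega
    simp only [hb0, if_false]
    exact spq _ _ (by omega) (by omega) (by omega) (by omega)
  · intro a b h1 h2 h3 h4
    have hb0 : b ≠ 0 := by omega
    simp only [hb0, if_false]
    exact spr _ _ (by omega) (by omega) (by omega) (by omega)
  · intro a b h1 h2 h3 h4
    have hb0 : b ≠ 0 := by omega
    have ha0 : a ≠ 0 := by omega
    simp only [hb0, ha0, if_false]
    exact sqr _ _ (by omega) (by omega) (by omega) (by omega)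

set_option maxHeartbeats 2000000 in
/-- Centre `p m`; third leg goes down along `s` to layer `i` and up along `r`. -/
lemma case3 (hl : Lay H ρ) (t m k i : ℕ) (p q r s : ℕ → W) (hmk : m + t < k) (him : i < m)
    (hp : Pth H ρ p m k) (hq : Pth H ρ q m k) (hr : Pth H ρ r i k) (hs : Pth H ρ s i m)
    (e1 : q m = p m) (e2 : s m = p m) (e3 : r i = s i)
    (n1 : ¬ H.Adj (r m) (p (m + 1))) (n2 : ¬ H.Adj (r m) (q (m + 1)))
    (hpq : ∀ i j, m < i → i ≤ k → m < j → j ≤ k → p i ≠ q j ∧ ¬ H.Adj (p i) (q j))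
    (hpr : ∀ i j, m < i → i ≤ k → m < j → j ≤ k → p i ≠ r j ∧ ¬ H.Adj (p i) (r j))
    (hqr : ∀ i j, m < i → i ≤ k → m < j → j ≤ k → q i ≠ r j ∧ ¬ H.Adj (q i) (r j))
    (hsr : ∀ j l, i < j → j ≤ m → i < l → l ≤ k → s j ≠ r l ∧ ¬ H.Adj (s j) (r l)) :
    Nonempty (subdividedClaw t ↪g H) := by
  have hp1 := hp.rk
  have hq1 := hq.rk
  have hr1 := hr.rk
  have hs1 := hs.rk
  have hpr' : ∀ a b, m < a → a ≤ k → i ≤ b → b ≤ k → p a ≠ r b ∧ ¬ H.Adj (p a) (r b) := by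
    intro a b h1 h2 h3 h4
    by_cases hb : m < b
    · exact hpr a b h1 h2 hb h4
    · refine ⟨nerk (ρ := ρ) (by grind), ?_⟩
      by_cases hab : a = m + 1 ∧ b = m
      · obtain ⟨rfl, rfl⟩ := hab
        exact fun h => n1 h.symm
      · exact nonadj hl (by grind) (by grind)
  have hqr' : ∀ a b, m < a → a ≤ k → i ≤ b → b ≤ k → q a ≠ r b ∧ ¬ H.Adj (q a) (r b) := by
    intro a b h1 h2 h3 h4
    by_cases hb : m < b
    · exact hqr a b h1 h2 hb h4
    · refine ⟨nerk (ρ := ρ) (by grind), ?_⟩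
      by_cases hab : a = m + 1 ∧ b = m
      · obtain ⟨rfl, rfl⟩ := hab
        exact fun h => n2 h.symm
      · exact nonadj hl (by grind) (by grind)
  have hsr' : ∀ j l, i < j → j ≤ m → i ≤ l → l ≤ k → (j ≠ i + 1 ∨ l ≠ i) →
      s j ≠ r l ∧ ¬ H.Adj (s j) (r l) := by
    intro j l h1 h2 h3 h4 h5
    by_cases hl' : i < l
    · exact hsr j l h1 h2 hl' h4
    · exact ⟨nerk (ρ := ρ) (by grind), nonadj hl (by grind) (by grind)⟩
  refine claw_of3 H t (fun a => p (m + a)) (fun a => q (m + a))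
    (fun a => if m ≤ i + a then r (i + (i + a - m)) else s (m - a))
    e1 (by simp [him, e2]) ?_ ?_ ?_ ?_ ?_ ?_
  · intro a ha
    refine ⟨hp.adj (m + a) (by omega) (by omega), hq.adj (m + a) (by omega) (by omega), ?_⟩
    by_cases h : m ≤ i + a
    · have := hr.adj (i + (i + a - m)) (by omega) (by omega)
      rw [show i + (i + a - m) + 1 = i + (i + (a + 1) - m) by omega] at this
      simpa only [h, show m ≤ i + (a + 1) by omega, if_true] using this
    · have := (hs.adj (m - (a + 1)) (by omega) (by omega)).symm
      rw [show m - (a + 1) + 1 = m - a by omega] at this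
      by_cases h' : m ≤ i + (a + 1)
      · simp only [h, h', if_true, if_false]
        rw [show i + (i + (a + 1) - m) = i by omega, e3]
        rwa [show m - (a + 1) = i by omega] at this
      · simpa only [h, h', if_false] using this
  · intro a b hb hab
    refine ⟨nonadj hl (by grind) (by grind), nonadj hl (by grind) (by grind), ?_⟩
    by_cases h : m ≤ i + a
    · simp only [h, show m ≤ i + b by omega, if_true]
      exact nonadj hl (by grind) (by grind)
    · by_cases h' : m ≤ i + b
      · simp only [h, h', if_true, if_false]
        exact (hsr' _ _ (by omega) (by omega) (by omega) (by omega) (by omega)).2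
      · simp only [h, h', if_false]
        exact nonadj hl (by grind) (by grind)
  · intro a b hb hab
    refine ⟨nerk (ρ := ρ) (by grind), nerk (ρ := ρ) (by grind), ?_⟩
    by_cases h : m ≤ i + a
    · simp only [h, show m ≤ i + b by omega, if_true]
      exact nerk (ρ := ρ) (by grind)
    · by_cases h' : m ≤ i + b
      · simp only [h, h', if_true, if_false]
        by_cases h5 : m - a ≠ i + 1 ∨ i + (i + b - m) ≠ i
        · exact (hsr' _ _ (by omega) (by omega) (by omega) (by omega) h5).1
        · exact nerk (ρ := ρ) (by grind)
      · simp only [h, h', if_false]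
        exact nerk (ρ := ρ) (by grind)
  · intro a b h1 h2 h3 h4
    exact hpq _ _ (by omega) (by omega) (by omega) (by omega)
  · intro a b h1 h2 h3 h4
    by_cases h' : m ≤ i + b
    · simp only [h', if_true]
      exact hpr' _ _ (by omega) (by omega) (by omega) (by omega)
    · simp only [h', if_false]
      exact ⟨nerk (ρ := ρ) (by grind), nonadj hl (by grind) (by grind)⟩
  · intro a b h1 h2 h3 h4
    by_cases h' : m ≤ i + b
    · simp only [h', if_true]
      exact hqr' _ _ (by omega) (by omega) (by omega) (by omega)
    · simp only [h', if_false]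
      exact ⟨nerk (ρ := ρ) (by grind), nonadj hl (by grind) (by grind)⟩

lemma exists_max (P : ℕ → Prop) (k : ℕ) (h0 : P 0) :
    ∃ m ≤ k, P m ∧ ∀ i, m < i → i ≤ k → ¬ P i := by
  classical
  refine ⟨Nat.findGreatest P k, Nat.findGreatest_le k, ?_, ?_⟩
  · exact Nat.findGreatest_spec (m := 0) (Nat.zero_le k) h0
  · intro i h1 h2
    exact Nat.findGreatest_is_greatest h1 h2

lemma Lay.common (hl : Lay H ρ) (x y : W) (k l : ℕ) (hx : ρ x = k) (hy : ρ y = l) :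
    ∃ a, Anc H ρ a x 0 k ∧ Anc H ρ a y 0 l := by
  obtain ⟨a, ha⟩ := hl.exists_anc x k hx k le_rfl
  obtain ⟨b, hb⟩ := hl.exists_anc y l hy l le_rfl
  rw [Nat.sub_self] at ha hb
  have e : a = b := by
    obtain ⟨p, hp, h1, -⟩ := ha
    obtain ⟨q, hq, h2, -⟩ := hb
    apply hl.root
    · rw [← h1]; exact hp.rk 0 le_rfl (by omega)
    · rw [← h2]; exact hq.rk 0 le_rfl (by omega)
  exact ⟨a, ha, e ▸ hb⟩

def Com (H : SimpleGraph W) (ρ : W → ℕ) (k : ℕ) (x y : W) (i : ℕ) : Prop :=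
  ∃ a, Anc H ρ a x i k ∧ Anc H ρ a y i k

lemma Com.symm {k i : ℕ} {x y : W} (h : Com H ρ k x y i) : Com H ρ k y x i := by
  obtain ⟨a, h1, h2⟩ := h
  exact ⟨a, h2, h1⟩

lemma core1 (hl : Lay H ρ) (t m k : ℕ) (x y z : W) (hmk : m + t < k)
    (hz : ρ z = k)
    (hc : Com H ρ k x y m)
    (hxy : ∀ i, m < i → i ≤ k → ¬ Com H ρ k x y i)
    (hxz : ∀ i, m < i → i ≤ k → ¬ Com H ρ k x z i)
    (hyz : ∀ i, m < i → i ≤ k → ¬ Com H ρ k y z i) :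
    Nonempty (subdividedClaw t ↪g H) := by
  have S : ∀ (x y : W) (m₁ m₂ : ℕ) (p q : ℕ → W), (∀ i, m < i → i ≤ k → ¬ Com H ρ k x y i) →
      Pth H ρ p m₁ k → Pth H ρ q m₂ k → m₁ ≤ m → m₂ ≤ m → p k = x → q k = y →
      ∀ i j, m < i → i ≤ k → m < j → j ≤ k → p i ≠ q j ∧ ¬ H.Adj (p i) (q j) := by
    intro x y m₁ m₂ p q h hp hq h1 h2 e1 e2
    intro i j a1 a2 a3 a4
    refine hl.sep hp hq (n := m) (by omega) (by omega) ?_ i j a1 a2 a3 a4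
    intro i b1 b2 b3 a c1 c2
    exact h i b1 b2 ⟨a, e1 ▸ c1, e2 ▸ c2⟩
  by_cases hall : ∃ a, Anc H ρ a x m k ∧ Anc H ρ a y m k ∧ Anc H ρ a z m k
  · obtain ⟨a, ⟨p, hp, p1, p2⟩, ⟨q, hq, q1, q2⟩, ⟨r, hr, r1, r2⟩⟩ := hall
    exact case1 hl t m k p q r hmk hp hq hr (by rw [q1, p1]) (by rw [r1, p1])
      (S x y m m p q hxy hp hq le_rfl le_rfl p2 q2)
      (S x z m m p r hxz hp hr le_rfl le_rfl p2 r2)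
      (S y z m m q r hyz hq hr le_rfl le_rfl q2 r2)
  obtain ⟨c, ⟨p, hp, p1, p2⟩, ⟨q, hq, q1, q2⟩⟩ := hc
  have hcx : Anc H ρ c x m k := ⟨p, hp, p1, p2⟩
  have hcy : Anc H ρ c y m k := ⟨q, hq, q1, q2⟩
  have hcz : ¬ Anc H ρ c z m k := fun h => hall ⟨c, hcx, hcy, h⟩
  have hρc : ρ c = m := by rw [← p1]; exact hp.rk m le_rfl (by omega)
  obtain ⟨i, him, ⟨e, ⟨s, hs, s1, s2⟩, ⟨r, hr, r1, r2⟩⟩, hmax⟩ :=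
    exists_max (fun i => ∃ e, Anc H ρ e c i m ∧ Anc H ρ e z i k) m (hl.common c z m k hρc hz)
  have him' : i < m := by
    rcases Nat.eq_or_lt_of_le him with rfl | h
    · exact absurd ⟨r, hr, by rw [r1, ← s1, s2], r2⟩ hcz
    · exact h
  have hr' : Pth H ρ r m k := hr.mono m him
  have hrz : Anc H ρ (r m) z m k := ⟨r, hr', rfl, r2⟩
  have hrm : ρ (r m) = m := hr'.rk m le_rfl (by omega)
  have hpq := S x y m m p q hxy hp hq le_rfl le_rfl p2 q2
  have hpr := S x z m m p r hxz hp hr' le_rfl le_rfl p2 r2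
  have hqr := S y z m m q r hyz hq hr' le_rfl le_rfl q2 r2
  have hcr : ¬ H.Adj c (r (m + 1)) := by
    intro h
    exact hcz (r2 ▸ hr'.anc_of_adj m (by omega) (by omega) c hρc h)
  have hne : c ≠ r m := fun h => hcz (h ▸ hrz)
  have hap : H.Adj (r m) (p (m + 1)) → Anc H ρ (r m) x m k := fun h =>
    p2 ▸ hp.anc_of_adj m (by omega) (by omega) _ hrm h
  have haq : H.Adj (r m) (q (m + 1)) → Anc H ρ (r m) y m k := fun h =>
    q2 ▸ hq.anc_of_adj m (by omega) (by omega) _ hrm h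
  by_cases h1 : H.Adj (r m) (p (m + 1))
  · have h2 : ¬ H.Adj (r m) (q (m + 1)) := fun h => hall ⟨_, hap h1, haq h, hrz⟩
    refine case2 hl t m k p q r hmk hp hq hr' ?_ h1 (by rwa [q1]) h2 (by rwa [q1]) hpq hpr hqr
    rw [q1, ← p1]; exact hp.adj m le_rfl (by omega)
  by_cases h2 : H.Adj (r m) (q (m + 1))
  · refine case2 hl t m k q p r hmk hq hp hr' ?_ h2 (by rwa [p1]) h1 (by rwa [p1]) ?_ hqr hpr
    · rw [p1, ← q1]; exact hq.adj m le_rfl (by omega)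
    · intro i j a1 a2 a3 a4
      have := hpq j i a3 a4 a1 a2
      exact ⟨this.1.symm, fun h => this.2 h.symm⟩
  refine case3 hl t m k i p q r s hmk him' hp hq hr hs (by rw [q1, p1]) (by rw [s2, p1])
    (by rw [r1, s1]) h1 h2 hpq hpr hqr ?_
  intro j l a1 a2 a3 a4
  refine hl.sep hs hr (n := i) (by omega) (by omega) ?_ j l a1 a2 a3 a4
  intro j b1 b2 b3 a c1 c2
  exact hmax j b1 b2 ⟨a, s2 ▸ c1, r2 ▸ c2⟩

lemma core (hl : Lay H ρ) (t k : ℕ) (x y z : W) (hx : ρ x = k) (hy : ρ y = k) (hz : ρ z = k)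
    (hxy : ∀ i, i ≤ k → Com H ρ k x y i → i + t < k)
    (hxz : ∀ i, i ≤ k → Com H ρ k x z i → i + t < k)
    (hyz : ∀ i, i ≤ k → Com H ρ k y z i → i + t < k) :
    Nonempty (subdividedClaw t ↪g H) := by
  obtain ⟨m, hmk, hm, hmax⟩ := exists_max
    (fun i => Com H ρ k x y i ∨ Com H ρ k x z i ∨ Com H ρ k y z i) k
    (Or.inl (hl.common x y k k hx hy))
  have n1 : ∀ i, m < i → i ≤ k → ¬ Com H ρ k x y i := fun i a b c => hmax i a b (Or.inl c)
  have n2 : ∀ i, m < i → i ≤ k → ¬ Com H ρ k x z i :=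
    fun i a b c => hmax i a b (Or.inr (Or.inl c))
  have n3 : ∀ i, m < i → i ≤ k → ¬ Com H ρ k y z i :=
    fun i a b c => hmax i a b (Or.inr (Or.inr c))
  have n1' : ∀ i, m < i → i ≤ k → ¬ Com H ρ k y x i := fun i a b c => n1 i a b c.symm
  have n2' : ∀ i, m < i → i ≤ k → ¬ Com H ρ k z x i := fun i a b c => n2 i a b c.symm
  have n3' : ∀ i, m < i → i ≤ k → ¬ Com H ρ k z y i := fun i a b c => n3 i a b c.symm
  rcases hm with h | h | h
  · exact core1 hl t m k x y z (hxy m hmk h) hz h n1 n2 n3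
  · exact core1 hl t m k x z y (hxz m hmk h) hy h n2 n1 n3'
  · exact core1 hl t m k y z x (hyz m hmk h) hx h n3 n1' n2'

end

section ball
variable {V : Type*} [Fintype V]

/-- Balls in a graph. -/
noncomputable def ball (G : SimpleGraph V) (x : V) : ℕ → Finset V
  | 0 => {x}
  | r + 1 => ball G x r ∪ Finset.univ.filter (fun v => ∃ w ∈ ball G x r, G.Adj w v)

lemma ball_succ_of_adj (G : SimpleGraph V) (x : V) (r : ℕ) {w v : V} (hw : w ∈ ball G x r)
    (h : G.Adj w v) : v ∈ ball G x (r + 1) := by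
  simp only [ball, Finset.mem_union, Finset.mem_filter, Finset.mem_univ, true_and]
  exact Or.inr ⟨w, hw, h⟩

lemma ball_sub (G : SimpleGraph V) (x : V) (r : ℕ) : ball G x r ⊆ ball G x (r + 1) := by
  intro v hv
  simp only [ball, Finset.mem_union]
  exact Or.inl hv

lemma ball_mono (G : SimpleGraph V) (x : V) {r s : ℕ} (h : r ≤ s) : ball G x r ⊆ ball G x s := by
  induction h with
  | refl => exact subset_rfl
  | step _ ih => exact ih.trans (ball_sub G x _)

noncomputable def nb (G : SimpleGraph V) (v : V) : Finset V :=
  Finset.univ.filter (fun w => G.Adj v w)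

lemma nb_card (G : SimpleGraph V) (v : V) : (nb G v).card = (G.neighborSet v).ncard := by
  rw [← Set.ncard_coe_finset]
  congr 1
  ext w
  simp [nb]

lemma sphere_card (G : SimpleGraph V) (Δ : ℕ)
    (hdeg : ∀ v : V, (G.neighborSet v).ncard ≤ Δ) (x : V) (r : ℕ) :
    (ball G x (r + 1) \ ball G x r).card ≤ Δ * (Δ - 1) ^ r := by
  induction r with
  | zero =>
    rw [pow_zero, mul_one]
    refine le_trans (Finset.card_le_card ?_) ((nb_card G x).le.trans (hdeg x))
    intro v hv
    simp [ball] at hv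
    simp [nb]
    tauto
  | succ r ih =>
    have hsub : ball G x (r + 1 + 1) \ ball G x (r + 1) ⊆
        (ball G x (r + 1) \ ball G x r).biUnion (fun w => nb G w \ ball G x r) := by
      intro v hv
      rw [Finset.mem_sdiff] at hv
      obtain ⟨h1, h2⟩ := hv
      rw [ball, Finset.mem_union] at h1
      rcases h1 with h1 | h1
      · exact absurd h1 h2
      simp only [Finset.mem_filter, Finset.mem_univ, true_and] at h1
      obtain ⟨w, hw, hwv⟩ := h1
      rw [Finset.mem_biUnion]
      refine ⟨w, Finset.mem_sdiff.2 ⟨hw, fun h => h2 (ball_succ_of_adj G x r h hwv)⟩, ?_⟩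
      exact Finset.mem_sdiff.2 ⟨by simpa [nb] using hwv, fun h => h2 (ball_sub G x r h)⟩
    refine (Finset.card_le_card hsub).trans ?_
    refine (Finset.card_biUnion_le_card_mul _ _ (Δ - 1) ?_).trans ?_
    · intro w hw
      rw [Finset.mem_sdiff] at hw
      obtain ⟨h1, h2⟩ := hw
      rw [ball, Finset.mem_union] at h1
      rcases h1 with h1 | h1
      · exact absurd h1 h2
      simp only [Finset.mem_filter, Finset.mem_univ, true_and] at h1
      obtain ⟨w', hw', hadj⟩ := h1
      have hlt : (nb G w \ ball G x r).card < (nb G w).card := by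
        apply Finset.card_lt_card
        rw [Finset.ssubset_iff_of_subset Finset.sdiff_subset]
        exact ⟨w', by simpa [nb] using hadj.symm, by simp [hw']⟩
      have := (nb_card G w).le.trans (hdeg w)
      omega
    · rw [pow_succ, ← mul_assoc]
      exact Nat.mul_le_mul_right _ ih

lemma ball_card (G : SimpleGraph V) (Δ : ℕ) (hΔ : 3 ≤ Δ)
    (hdeg : ∀ v : V, (G.neighborSet v).ncard ≤ Δ) (x : V) (r : ℕ) :
    ((ball G x r).card : ℝ) ≤ vol Δ r := by
  have hΔ' : (3 : ℝ) ≤ Δ := by exact_mod_cast hΔ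
  have hne : (Δ : ℝ) - 2 ≠ 0 := by linarith
  induction r with
  | zero => simp [ball, vol]
  | succ r ih =>
    have h1 := sphere_card G Δ hdeg x r
    have h2 := Finset.card_sdiff_add_card_eq_card (ball_sub G x r)
    have h3 : ((ball G x (r + 1) \ ball G x r).card : ℝ) ≤ Δ * ((Δ : ℝ) - 1) ^ r := by
      have : ((Δ - 1 : ℕ) : ℝ) = (Δ : ℝ) - 1 := by
        rw [Nat.cast_sub (by omega)]; simp
      rw [← this]
      exact_mod_cast h1
    have h4 : vol Δ (r + 1) = vol Δ r + Δ * ((Δ : ℝ) - 1) ^ r := by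
      unfold vol
      field_simp
      ring
    rw [h4, ← h2]
    push_cast
    linarith

end ball

/-- The layered structure behind an admissible pair. -/
structure LD {V : Type*} [Fintype V] (G : SimpleGraph V) (u : V) (L U : Finset V)
    (S : Finset V) (ρ : V → ℕ) (k : ℕ) : Prop where
  adj : ∀ a ∈ S, ∀ b ∈ S, G.Adj a b → ρ a = ρ b + 1 ∨ ρ b = ρ a + 1
  par : ∀ a ∈ S, ∀ n, ρ a = n + 1 → ∃ b ∈ S, G.Adj b a ∧ ρ b = n
  root : ∀ a ∈ S, ρ a = 0 → a = u
  mem : ∀ a, a ∈ L ↔ a ∈ S ∧ ρ a = k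
  le : ∀ a ∈ S, ρ a ≤ k
  ne : L.Nonempty
  disj : ∀ a ∈ U, a ∉ S
  nadj : ∀ a ∈ U, ∀ b ∈ S, G.Adj a b → ρ b = k

lemma LD.rootcase {V : Type*} [Fintype V] (G : SimpleGraph V) (u : V) :
    LD G u {u} (Finset.univ \ {u}) {u} (fun _ => 0) 0 := by
  refine ⟨?_, ?_, ?_, ?_, ?_, ?_, ?_, ?_⟩ <;> simp

lemma exists_LD {V : Type*} [Fintype V] (G : SimpleGraph V) (u : V) (L U : Finset V)
    (h : Admissible G u L U) :
    (L = ∅ ∧ U = Finset.univ) ∨ ∃ S ρ k, LD G u L U S ρ k := by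
  induction h with
  | base => exact Or.inl ⟨rfl, rfl⟩
  | root => exact Or.inr ⟨_, _, _, LD.rootcase G u⟩
  | step L' U' L _ hne hsub hind ih =>
    right
    rcases ih with ⟨rfl, rfl⟩ | ⟨S, ρ, k, hd⟩
    · have e : bdry G u ∅ = {u} := by simp [bdry]
      rw [e] at hsub ⊢
      have : L = {u} := by
        apply (Finset.Nonempty.subset_singleton_iff hne).1
        exact hsub.trans Finset.inter_subset_left
      subst this
      exact ⟨_, _, _, LD.rootcase G u⟩
    · have hb : ∀ v, v ∈ bdry G u L' ↔ v ∉ L' ∧ ∃ x ∈ L', G.Adj v x := by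
        intro v
        simp [bdry, hd.ne.ne_empty]
      have hLU : ∀ a ∈ L, a ∈ U' := fun a ha => (Finset.mem_inter.1 (hsub ha)).2
      have hLb : ∀ a ∈ L, a ∉ L' ∧ ∃ x ∈ L', G.Adj a x :=
        fun a ha => (hb a).1 (Finset.mem_inter.1 (hsub ha)).1
      have hLS : ∀ a ∈ L, a ∉ S := fun a ha => hd.disj a (hLU a ha)
      have hSL : ∀ a ∈ S, a ∉ L := fun a ha h => hLS a h ha
      refine ⟨S ∪ L, fun v => if v ∈ L then k + 1 else ρ v, k + 1, ?_, ?_, ?_, ?_, ?_, hne, ?_, ?_⟩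
      · intro a ha b hb' hab
        rw [Finset.mem_union] at ha hb'
        by_cases h1 : a ∈ L <;> by_cases h2 : b ∈ L
        · exact absurd hab (hind a h1 b h2)
        · have := hd.nadj a (hLU a h1) b (by tauto) hab
          simp [h1, h2, this]
        · have := hd.nadj b (hLU b h2) a (by tauto) hab.symm
          simp [h1, h2, this]
        · simpa [h1, h2] using hd.adj a (by tauto) b (by tauto) hab
      · intro a ha n hn
        rw [Finset.mem_union] at ha
        by_cases h1 : a ∈ L
        · simp only [h1, if_true] at hn
          obtain ⟨x, hx, hax⟩ := (hLb a h1).2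
          have hx' := (hd.mem x).1 hx
          refine ⟨x, Finset.mem_union_left _ hx'.1, hax.symm, ?_⟩
          simp only [hSL x hx'.1, if_false]
          omega
        · simp only [h1, if_false] at hn
          obtain ⟨b, hbS, hba, hbn⟩ := hd.par a (by tauto) n hn
          refine ⟨b, Finset.mem_union_left _ hbS, hba, ?_⟩
          simpa only [hSL b hbS, if_false] using hbn
      · intro a ha h0
        rw [Finset.mem_union] at ha
        by_cases h1 : a ∈ L
        · simp [h1] at h0
        · simp only [h1, if_false] at h0
          exact hd.root a (by tauto) h0
      · intro a
        rw [Finset.mem_union]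
        by_cases h1 : a ∈ L
        · simp [h1]
        · simp only [h1, if_false, or_false, false_iff, not_and]
          intro h2
          have := hd.le a h2
          omega
      · intro a ha
        rw [Finset.mem_union] at ha
        by_cases h1 : a ∈ L
        · simp [h1]
        · simp only [h1, if_false]
          have := hd.le a (by tauto)
          omega
      · intro a ha
        rw [Finset.mem_sdiff] at ha
        rw [Finset.mem_union]
        rintro (h1 | h1)
        · exact hd.disj a ha.1 h1
        · exact ha.2 ((hb a).2 (hLb a h1))
      · intro a ha b hbS hab
        rw [Finset.mem_sdiff] at ha
        rw [Finset.mem_union] at hbS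
        by_cases h1 : b ∈ L
        · simp [h1]
        · exfalso
          have hbS' : b ∈ S := by tauto
          have hk := hd.nadj a ha.1 b hbS' hab
          apply ha.2
          rw [hb]
          refine ⟨fun h => hd.disj a ha.1 ((hd.mem a).1 h).1, b, (hd.mem b).2 ⟨hbS', hk⟩, hab⟩

lemma mem_ball_down {V : Type*} [Fintype V] (G : SimpleGraph V) (x : V) (p : ℕ → V) (m k : ℕ)
    (hp : ∀ i, m ≤ i → i < k → G.Adj (p i) (p (i + 1))) (hx : p k = x) (d : ℕ)
    (hd : m + d ≤ k) : p (k - d) ∈ ball G x d := by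
  induction d with
  | zero => simp [ball, hx]
  | succ d ih =>
    apply ball_succ_of_adj G x d (ih (by omega))
    have := hp (k - (d + 1)) (by omega) (by omega)
    rw [show k - (d + 1) + 1 = k - d by omega] at this
    exact this.symm

lemma mem_ball_up {V : Type*} [Fintype V] (G : SimpleGraph V) (x : V) (p : ℕ → V) (m k r : ℕ)
    (hp : ∀ i, m ≤ i → i < k → G.Adj (p i) (p (i + 1))) (hx : p m ∈ ball G x r) (d : ℕ)
    (hd : m + d ≤ k) : p (m + d) ∈ ball G x (r + d) := by
  induction d with
  | zero => simpa using hx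
  | succ d ih =>
    exact ball_succ_of_adj G x (r + d) (ih (by omega)) (hp (m + d) (by omega) (by omega))

end ClawAux

/-- in an `S_{t,t,t}`-free graph of maximum degree at most `Δ`,
every admissible pair `(L, U)` satisfies `|L| ≤ 2·vol(Δ, 2t)`. -/
theorem stmt5 (t Δ : ℕ) (ht : 1 ≤ t) (hΔ : 3 ≤ Δ)
    {V : Type} [Fintype V] (G : SimpleGraph V)
    (hfree : IsEmpty (subdividedClaw t ↪g G))
    (hdeg : ∀ v : V, (G.neighborSet v).ncard ≤ Δ)
    (u : V) (L U : Finset V) (h : Admissible G u L U) :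
    (L.card : ℝ) ≤ 2 * vol Δ (2 * t) := by
  have hball := ClawAux.ball_card G Δ hΔ hdeg
  have hpos : 0 ≤ vol Δ (2 * t) := le_trans (Nat.cast_nonneg _) (hball u (2 * t))
  rcases ClawAux.exists_LD G u L U h with ⟨rfl, -⟩ | ⟨S, ρ, k, hd⟩
  · simpa using hpos
  by_contra hlt
  push Not at hlt
  obtain ⟨x, hx⟩ := hd.ne
  have hy : ∃ y ∈ L, y ∉ ClawAux.ball G x (2 * t) := by
    by_contra hcon
    push Not at hcon
    have h1 : L.card ≤ (ClawAux.ball G x (2 * t)).card := Finset.card_le_card hcon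
    have h2 : (L.card : ℝ) ≤ (ClawAux.ball G x (2 * t)).card := by exact_mod_cast h1
    have := hball x (2 * t)
    linarith
  obtain ⟨y, hy, hxy⟩ := hy
  have hz : ∃ z ∈ L, z ∉ ClawAux.ball G x (2 * t) ∪ ClawAux.ball G y (2 * t) := by
    by_contra hcon
    push Not at hcon
    have h1 := (Finset.card_le_card hcon).trans (Finset.card_union_le _ _)
    have h2 : (L.card : ℝ) ≤
      (ClawAux.ball G x (2 * t)).card + (ClawAux.ball G y (2 * t)).card := by exact_mod_cast h1
    have := hball x (2 * t)
    have := hball y (2 * t)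
    linarith
  obtain ⟨z, hz, hxyz⟩ := hz
  rw [Finset.mem_union, not_or] at hxyz
  obtain ⟨hxz, hyz⟩ := hxyz
  let H : SimpleGraph {v // v ∈ S} := G.comap (Function.Embedding.subtype _)
  let ρ' : {v // v ∈ S} → ℕ := fun v => ρ v
  have hl : ClawAux.Lay H ρ' := by
    refine ⟨?_, ?_, ?_⟩
    · rintro ⟨a, ha⟩ ⟨b, hb⟩ hab
      exact hd.adj a ha b hb hab
    · rintro ⟨a, ha⟩ n hn
      obtain ⟨b, hb, h1, h2⟩ := hd.par a ha n hn
      exact ⟨⟨b, hb⟩, h1, h2⟩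
    · rintro ⟨a, ha⟩ ⟨b, hb⟩ h1 h2
      exact Subtype.ext ((hd.root a ha h1).trans (hd.root b hb h2).symm)
  have far : ∀ x y : {v // v ∈ S}, (y : V) ∉ ClawAux.ball G x (2 * t) →
      ∀ i, i ≤ k → ClawAux.Com H ρ' k x y i → i + t < k := by
    rintro x y hxy i hik ⟨a, ⟨p, hp, p1, p2⟩, ⟨q, hq, q1, q2⟩⟩
    by_contra hcon
    apply hxy
    have b1 := ClawAux.mem_ball_down G x (fun j => (p j : V)) i k
      (fun j h1 h2 => hp.adj j h1 h2) (by simp [p2]) (k - i) (by omega)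
    rw [show k - (k - i) = i by omega] at b1
    have b2 := ClawAux.mem_ball_up G x (fun j => (q j : V)) i k (k - i)
      (fun j h1 h2 => hq.adj j h1 h2) (by simpa [q1, p1] using b1) (k - i) (by omega)
    rw [show i + (k - i) = k by omega] at b2
    simp only [q2] at b2
    exact ClawAux.ball_mono G x (by omega) b2
  have hx' := (hd.mem x).1 hx
  have hy' := (hd.mem y).1 hy
  have hz' := (hd.mem z).1 hz
  obtain ⟨f⟩ := ClawAux.core hl t k ⟨x, hx'.1⟩ ⟨y, hy'.1⟩ ⟨z, hz'.1⟩ hx'.2 hy'.2 hz'.2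
    (far _ _ hxy) (far _ _ hxz) (far _ _ hyz)
  exact hfree.false (f.trans (SimpleGraph.Embedding.comap _ G))
end
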